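/- Let s > 7/2 and suppose (ξ_k)_{k≥1} satisfies Σ_{k≥1} ‖ξ_k‖_{H^σ} < ∞ for every σ ≥ 0. Define, for θ ∈ H^s(𝕋), g(θ) = −(𝓗θ) ∂_x θ + ½ Σ_{k=1}^∞ 𝓛²_{ξ_k} θ, and for ε ∈ (0,1) let T̃_ε = (1 − ε²∂²_x)^{-1}. Then there is a constant C > 0, independent of ε, such that for all θ ∈ H^s(𝕋): 2 (T̃_ε g(θ), T̃_ε θ)_{H^s} + Σ_{k=1}^∞ ‖T̃_ε 𝓛_{ξ_k} θ‖²_{H^s} ≤ C (1 + ‖∂_x θ‖_{L^∞} + ‖𝓗∂_x θ‖_{L^∞}) ‖θ‖²_{H^s}. -/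

import Mathlib

noncomputable section
open scoped BigOperators

/-- A (complex-valued) function on the torus `𝕋 = ℝ/2πℤ`, represented by its sequence of
Fourier coefficients `f̂ : ℤ → ℂ`. -/
abbrev FC := ℤ → ℂ

namespace FC

/-- The Sobolev weight `(1+k²)^s`. -/
def wt (s : ℝ) (k : ℤ) : ℝ := (1 + (k : ℝ) ^ 2) ^ s

/-- `c` represents a function belonging to the Sobolev space `H^s(𝕋)`. -/
def memHs (s : ℝ) (c : FC) : Prop := Summable fun k : ℤ => wt s k * ‖c k‖ ^ 2

/-- The `H^s(𝕋)` norm: `‖f‖²_{H^s} = Σ_{k∈ℤ} (1+k²)^s |f̂(k)|²`. -/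
def hsNorm (s : ℝ) (c : FC) : ℝ := Real.sqrt (∑' k : ℤ, wt s k * ‖c k‖ ^ 2)

/-- The `H^s(𝕋)` inner product `(f,g)_{H^s} = Σ_{k∈ℤ} (1+k²)^s f̂(k) conj(ĝ(k))`
(its real part; the sum is real for real-valued functions). -/
def hsInner (s : ℝ) (c d : FC) : ℝ :=
  (∑' k : ℤ, ((wt s k : ℂ) * (c k * (starRingEnd ℂ) (d k)))).re

/-- `c` represents a real-valued function (conjugate-symmetric coefficients). -/
def isReal (c : FC) : Prop := ∀ k : ℤ, c (-k) = (starRingEnd ℂ) (c k)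

/-- The derivative `∂ₓ`, i.e. the Fourier multiplier `ik`. -/
def D1 (c : FC) : FC := fun k => Complex.I * (k : ℂ) * c k

/-- The pointwise product of functions, i.e. convolution of Fourier coefficients. -/
def mul (c d : FC) : FC := fun k => ∑' j : ℤ, c j * d (k - j)

/-- The represented function, evaluated at `x ∈ ℝ`. -/
def eval (c : FC) (x : ℝ) : ℂ := ∑' k : ℤ, c k * Complex.exp (Complex.I * (k : ℂ) * (x : ℂ))

/-- The `L^∞` norm (supremum of the represented periodic function over ℝ). -/
def linfty (c : FC) : ℝ := ⨆ x : ℝ, ‖eval c x‖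

/-- The `W^{1,∞}` norm. -/
def w1infty (c : FC) : ℝ := linfty c + linfty (D1 c)

/-- A Fourier multiplier operator with real symbol `m`. -/
def mult (m : ℤ → ℝ) (c : FC) : FC := fun k => (m k : ℂ) * c k

/-- The operator `(1-∂ₓ²)⁻¹`, i.e. the Fourier multiplier `(1+k²)⁻¹`. -/
def helmInv : FC → FC := mult fun k => (1 + (k : ℝ) ^ 2)⁻¹

/-- The operator `1-∂ₓ²`, i.e. the Fourier multiplier `1+k²`. -/
def helm : FC → FC := mult fun k => 1 + (k : ℝ) ^ 2

/-- The operator `T̃_ε = (1-ε²∂ₓ²)⁻¹`, i.e. the Fourier multiplier `(1+ε²k²)⁻¹`. -/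
def T (ε : ℝ) : FC → FC := mult fun k => (1 + ε ^ 2 * (k : ℝ) ^ 2)⁻¹

/-- The periodic Hilbert transform, i.e. the Fourier multiplier `-i·sgn(k)`. -/
def hilbert (c : FC) : FC := fun k => -Complex.I * (Int.sign k : ℂ) * c k

/-- The Friedrichs-type mollifier `J_ε`, the Fourier multiplier `ĵ(εk)`. -/
def Jmol (jhat : ℝ → ℝ) (ε : ℝ) : FC → FC := mult fun k => jhat (ε * (k : ℝ))

/-- The generalized Lie derivative `𝓛_ξ f = ξ ∂ₓ f + (∂ₓ ξ) f`. -/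
def lie (ξ c : FC) : FC := mul ξ (D1 c) + mul (D1 ξ) c

/-- `𝓛²_ξ f = 𝓛_ξ (𝓛_ξ f)`. -/
def lie2 (ξ c : FC) : FC := lie ξ (lie ξ c)

/-- The coefficientwise sum `Σ_{k∈ℕ} F k` of a sequence of functions. -/
def tsumFC (F : ℕ → FC) : FC := fun m => ∑' k : ℕ, F k m

/-- The norm on the product space `H^{s₁}×H^{s₂}`. -/
def pairNorm (s₁ s₂ : ℝ) (c d : FC) : ℝ := Real.sqrt (hsNorm s₁ c ^ 2 + hsNorm s₂ d ^ 2)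

/-- The inner product on the product space `H^{s₁}×H^{s₂}`:
`((c₁,d₁),(c₂,d₂)) ↦ (c₁,c₂)_{H^{s₁}} + (d₁,d₂)_{H^{s₂}}`. -/
def pairInner (s₁ s₂ : ℝ) (c₁ d₁ c₂ d₂ : FC) : ℝ := hsInner s₁ c₁ c₂ + hsInner s₂ d₁ d₂

end FC

/-- The singular drift of the stochastic CCF model:
`g(θ) = −(𝓗θ) ∂ₓθ + ½ Σ_k 𝓛²_{ξ_k} θ`. -/
def gCCF (ξ : ℕ → FC) (θ : FC) : FC :=
  -(FC.mul (FC.hilbert θ) (FC.D1 θ)) + (1 / 2 : ℝ) • FC.tsumFC fun k => FC.lie2 (ξ k) θ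


section SchurMultipliers
open MeasureTheory Set Filter Topology

/-- A matrix bounded by `B` as a bilinear form on finitely supported sequences. -/
def MBdd (M : ℤ → ℤ → ℂ) (B : ℝ) : Prop :=
  ∀ (F : Finset ℤ) (u v : ℤ → ℂ),
    ‖∑ a ∈ F, ∑ c ∈ F, M a c * (u a * v c)‖
      ≤ B / 2 * (∑ a ∈ F, ‖u a‖ ^ 2 + ∑ c ∈ F, ‖v c‖ ^ 2)

/-- Schur multipliers (uniform in `ε`) on matrices supported in `0 < a < c`. -/
def SM (Φ : ℝ → ℤ → ℤ → ℝ) : Prop :=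
  ∃ C : ℝ, 0 ≤ C ∧ ∀ ε ∈ Set.Ioo (0 : ℝ) 1, ∀ (M : ℤ → ℤ → ℂ) (B : ℝ), 0 ≤ B →
    (∀ a c, ¬ (0 < a ∧ a < c) → M a c = 0) → MBdd M B →
    MBdd (fun a c => (Φ ε a c : ℂ) * M a c) (C * B)

theorem SM.congr {Φ Ψ : ℝ → ℤ → ℤ → ℝ} (h : SM Φ)
    (he : ∀ ε ∈ Set.Ioo (0 : ℝ) 1, ∀ a c : ℤ, 0 < a → a < c → Ψ ε a c = Φ ε a c) : SM Ψ := by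
  obtain ⟨C, hC, h⟩ := h
  refine ⟨C, hC, fun ε hε M B hB hM hb => ?_⟩
  have : (fun a c => (Ψ ε a c : ℂ) * M a c) = fun a c => (Φ ε a c : ℂ) * M a c := by
    funext a c
    by_cases hac : 0 < a ∧ a < c
    · rw [he ε hε a c hac.1 hac.2]
    · rw [hM a c hac]; simp
  rw [this]
  exact h ε hε M B hB hM hb

theorem SM.add {Φ Ψ : ℝ → ℤ → ℤ → ℝ} (h1 : SM Φ) (h2 : SM Ψ) :
    SM (fun ε a c => Φ ε a c + Ψ ε a c) := by
  obtain ⟨C, hC, h1⟩ := h1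
  obtain ⟨D, hD, h2⟩ := h2
  refine ⟨C + D, by positivity, fun ε hε M B hB hM hb F u v => ?_⟩
  have e1 := h1 ε hε M B hB hM hb F u v
  have e2 := h2 ε hε M B hB hM hb F u v
  have : ∑ a ∈ F, ∑ c ∈ F, (((Φ ε a c + Ψ ε a c : ℝ)) : ℂ) * M a c * (u a * v c)
      = ∑ a ∈ F, ∑ c ∈ F, (Φ ε a c : ℂ) * M a c * (u a * v c)
        + ∑ a ∈ F, ∑ c ∈ F, (Ψ ε a c : ℂ) * M a c * (u a * v c) := by
    rw [← Finset.sum_add_distrib]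
    refine Finset.sum_congr rfl fun a _ => ?_
    rw [← Finset.sum_add_distrib]
    refine Finset.sum_congr rfl fun c _ => ?_
    push_cast; ring
  simp only [] at e1 e2 ⊢
  rw [this]
  refine (norm_add_le _ _).trans ((add_le_add e1 e2).trans (le_of_eq (by ring)))

theorem SM.mul {Φ Ψ : ℝ → ℤ → ℤ → ℝ} (h1 : SM Φ) (h2 : SM Ψ) :
    SM (fun ε a c => Φ ε a c * Ψ ε a c) := by
  obtain ⟨C, hC, h1⟩ := h1
  obtain ⟨D, hD, h2⟩ := h2
  refine ⟨C * D, by positivity, fun ε hε M B hB hM hb => ?_⟩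
  have e2 := h2 ε hε M B hB hM hb
  have e1 := h1 ε hε _ (D * B) (by positivity) (fun a c hac => by simp [hM a c hac]) e2
  have : (fun a c => (((Φ ε a c * Ψ ε a c : ℝ)) : ℂ) * M a c)
      = fun a c => (Φ ε a c : ℂ) * ((Ψ ε a c : ℂ) * M a c) := by
    funext a c; push_cast; ring
  rw [this, mul_assoc]
  exact e1

theorem MBdd.scale {M : ℤ → ℤ → ℂ} {B : ℝ} (hB : 0 ≤ B) (h : MBdd M B) {D E : ℝ} (d e : ℤ → ℝ)
    (hd : ∀ a, |d a| ≤ D) (he : ∀ a, |e a| ≤ E) (F : Finset ℤ) (u v : ℤ → ℂ) :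
    ‖∑ a ∈ F, ∑ c ∈ F, ((d a * e c : ℝ) : ℂ) * M a c * (u a * v c)‖
      ≤ B / 2 * (D ^ 2 * ∑ a ∈ F, ‖u a‖ ^ 2 + E ^ 2 * ∑ c ∈ F, ‖v c‖ ^ 2) := by
  have := h F (fun a => d a * u a) (fun c => e c * v c)
  have e1 : ∑ a ∈ F, ∑ c ∈ F, ((d a * e c : ℝ) : ℂ) * M a c * (u a * v c)
      = ∑ a ∈ F, ∑ c ∈ F, M a c * ((d a * u a) * (e c * v c)) := by
    refine Finset.sum_congr rfl fun a _ => Finset.sum_congr rfl fun c _ => ?_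
    push_cast; ring
  rw [e1]
  refine this.trans ?_
  rw [Finset.mul_sum, Finset.mul_sum]
  have hsq : ∀ (x y : ℝ), |x| ≤ y → x ^ 2 ≤ y ^ 2 := fun x y h => by
    rw [← sq_abs]; exact pow_le_pow_left₀ (abs_nonneg _) h 2
  refine mul_le_mul_of_nonneg_left (add_le_add (Finset.sum_le_sum fun a _ => ?_)
    (Finset.sum_le_sum fun a _ => ?_)) (by positivity)
  · rw [norm_mul, mul_pow, Complex.norm_real, Real.norm_eq_abs, sq_abs]
    exact mul_le_mul_of_nonneg_right (hsq _ _ (hd a)) (by positivity)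
  · rw [norm_mul, mul_pow, Complex.norm_real, Real.norm_eq_abs, sq_abs]
    exact mul_le_mul_of_nonneg_right (hsq _ _ (he a)) (by positivity)

theorem SM.diag {D E : ℝ} (d e : ℝ → ℤ → ℝ)
    (hd : ∀ ε ∈ Set.Ioo (0 : ℝ) 1, ∀ a, |d ε a| ≤ D)
    (he : ∀ ε ∈ Set.Ioo (0 : ℝ) 1, ∀ a, |e ε a| ≤ E) :
    SM (fun ε a c => d ε a * e ε c) := by
  refine ⟨D ^ 2 + E ^ 2, by positivity, fun ε hε M B hB hM hb F u v => ?_⟩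
  refine (hb.scale hB (d ε) (e ε) (hd ε hε) (he ε hε) F u v).trans ?_
  have h1 : 0 ≤ ∑ a ∈ F, ‖u a‖ ^ 2 := by positivity
  have h2 : 0 ≤ ∑ a ∈ F, ‖v a‖ ^ 2 := by positivity
  have h3 : 0 ≤ B * D ^ 2 * ∑ a ∈ F, ‖v a‖ ^ 2 := by positivity
  have h4 : 0 ≤ B * E ^ 2 * ∑ a ∈ F, ‖u a‖ ^ 2 := by positivity
  nlinarith

theorem SM.const (r : ℝ) : SM (fun _ _ _ => r) :=
  (SM.diag (D := |r|) (E := 1) (fun _ _ => r) (fun _ _ => 1) (by simp) (by simp)).congr (by simp)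

theorem SM.left {D : ℝ} (d : ℝ → ℤ → ℝ)
    (hd : ∀ ε ∈ Set.Ioo (0 : ℝ) 1, ∀ a, |d ε a| ≤ D) : SM (fun ε a _ => d ε a) :=
  (SM.diag (E := 1) d (fun _ _ => 1) hd (by simp)).congr (by simp)

theorem SM.right {D : ℝ} (d : ℝ → ℤ → ℝ)
    (hd : ∀ ε ∈ Set.Ioo (0 : ℝ) 1, ∀ a, |d ε a| ≤ D) : SM (fun ε _ c => d ε c) :=
  (SM.diag (D := 1) (fun _ _ => 1) d (by simp) hd).congr (by simp)

theorem SM.sum {n : ℕ} (Φ : ℕ → ℝ → ℤ → ℤ → ℝ) (h : ∀ i < n, SM (Φ i)) :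
    SM (fun ε a c => ∑ i ∈ Finset.range n, Φ i ε a c) := by
  induction n with
  | zero => simpa using SM.const 0
  | succ n ih =>
    simp only [Finset.sum_range_succ]
    exact (ih fun i hi => h i (by omega)).add (h n (by omega))

theorem SM.gram {Ω : Type*} [MeasurableSpace Ω] (μ : Measure Ω) (p : ℝ → Ω → ℤ → ℝ) (C : ℝ)
    (hintg : ∀ ε ∈ Set.Ioo (0 : ℝ) 1, ∀ a c, Integrable (fun t => p ε t a * p ε t c) μ)
    (hC : ∀ ε ∈ Set.Ioo (0 : ℝ) 1, ∀ a, ∫ t, p ε t a * p ε t a ∂μ ≤ C) (hC0 : 0 ≤ C) :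
    SM (fun ε a c => ∫ t, p ε t a * p ε t c ∂μ) := by
  refine ⟨C, hC0, fun ε hε M B hB hM hb F u v => ?_⟩
  have hi := hintg ε hε
  have e1 : ∑ a ∈ F, ∑ c ∈ F, ((∫ t, p ε t a * p ε t c ∂μ : ℝ) : ℂ) * M a c * (u a * v c)
      = ∫ t, ∑ a ∈ F, ∑ c ∈ F, M a c * ((p ε t a * u a) * (p ε t c * v c)) ∂μ := by
    have hI : ∀ a c, Integrable (fun t => M a c * ((p ε t a * u a) * (p ε t c * v c))) μ := by
      intro a c
      have := ((hi a c).ofReal (𝕜 := ℂ)).mul_const (M a c * (u a * v c))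
      refine this.congr (Eventually.of_forall fun t => ?_)
      simp only [RCLike.ofReal_mul]
      change (p ε t a : ℂ) * (p ε t c : ℂ) * _ = _
      ring
    rw [integral_finsetSum _ fun a _ => integrable_finsetSum _ fun c _ => hI a c]
    refine Finset.sum_congr rfl fun a _ => ?_
    rw [integral_finsetSum _ fun c _ => hI a c]
    refine Finset.sum_congr rfl fun c _ => ?_
    have : (fun t => M a c * ((p ε t a * u a) * (p ε t c * v c)))
        = fun t => ((p ε t a * p ε t c : ℝ) : ℂ) * (M a c * (u a * v c)) := by
      funext t; push_cast; ring
    rw [this, integral_mul_const, integral_complex_ofReal]; ring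
  have hg : Integrable (fun t => B / 2 * (∑ a ∈ F, (p ε t a * p ε t a) * ‖u a‖ ^ 2
      + ∑ c ∈ F, (p ε t c * p ε t c) * ‖v c‖ ^ 2)) μ := by
    refine Integrable.const_mul (Integrable.add ?_ ?_) _ <;>
    exact integrable_finsetSum _ fun a _ => (hi a a).mul_const _
  rw [e1]
  refine (norm_integral_le_of_norm_le hg (Eventually.of_forall fun t => ?_)).trans ?_
  · refine (hb F (fun a => p ε t a * u a) (fun c => p ε t c * v c)).trans (le_of_eq ?_)
    congr 1
    congr 1 <;>
    · refine Finset.sum_congr rfl fun a _ => ?_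
      rw [norm_mul, mul_pow, Complex.norm_real, Real.norm_eq_abs, sq_abs]; ring
  · rw [integral_const_mul, integral_add, integral_finsetSum _ fun a _ => (hi a a).mul_const _,
      integral_finsetSum _ fun a _ => (hi a a).mul_const _]
    · have key : ∀ w : ℤ → ℂ, ∑ a ∈ F, ∫ t, p ε t a * p ε t a * ‖w a‖ ^ 2 ∂μ
          ≤ C * ∑ a ∈ F, ‖w a‖ ^ 2 := by
        intro w
        rw [Finset.mul_sum]
        refine Finset.sum_le_sum fun a _ => ?_
        rw [integral_mul_const]
        exact mul_le_mul_of_nonneg_right (hC ε hε a) (by positivity)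
      calc _ ≤ B / 2 * (C * ∑ a ∈ F, ‖u a‖ ^ 2 + C * ∑ a ∈ F, ‖v a‖ ^ 2) :=
            mul_le_mul_of_nonneg_left (add_le_add (key u) (key v)) (by positivity)
        _ = _ := by ring
    · exact integrable_finsetSum _ fun a _ => (hi a a).mul_const _
    · exact integrable_finsetSum _ fun a _ => (hi a a).mul_const _

theorem SM.ratio (w : ℝ → ℤ → ℝ)
    (hpos : ∀ ε ∈ Set.Ioo (0 : ℝ) 1, ∀ a, 0 < a → 0 < w ε a)
    (hmono : ∀ ε ∈ Set.Ioo (0 : ℝ) 1, ∀ a c, 0 < a → a < c → w ε a ≤ w ε c) :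
    SM (fun ε a c => w ε a / w ε c) := by
  set p : ℝ → ℝ → ℤ → ℝ := fun ε t a =>
    if 0 < a then (Ioc 0 (w ε a ^ 2)).indicator (fun _ => (w ε a)⁻¹) t else 0 with hp
  have hprod : ∀ ε ∈ Set.Ioo (0 : ℝ) 1, ∀ a c : ℤ, 0 < a → 0 < c →
      (fun t => p ε t a * p ε t c) = (Ioc 0 (min (w ε a ^ 2) (w ε c ^ 2))).indicator
        (fun _ => (w ε a)⁻¹ * (w ε c)⁻¹) := by
    intro ε hε a c ha hc
    funext t
    simp only [hp, ha, hc, if_true, indicator, mem_Ioc, le_min_iff]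
    by_cases h0 : 0 < t <;> by_cases h1 : t ≤ w ε a ^ 2 <;> by_cases h2 : t ≤ w ε c ^ 2 <;>
      simp [h0, h1, h2]
  have hval : ∀ ε ∈ Set.Ioo (0 : ℝ) 1, ∀ a c : ℤ, 0 < a → 0 < c → w ε a ≤ w ε c →
      ∫ t, p ε t a * p ε t c = w ε a / w ε c := by
    intro ε hε a c ha hc hac
    have h1 := hpos ε hε a ha
    have h2 := hpos ε hε c hc
    rw [hprod ε hε a c ha hc, min_eq_left (pow_le_pow_left₀ h1.le hac 2),
      integral_indicator measurableSet_Ioc, setIntegral_const]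
    simp only [measureReal_def, Real.volume_Ioc, sub_zero, smul_eq_mul]
    rw [ENNReal.toReal_ofReal (by positivity)]
    field_simp
  refine (SM.gram volume p 1 ?_ ?_ zero_le_one).congr ?_
  · intro ε hε a c
    by_cases ha : 0 < a
    · by_cases hc : 0 < c
      · rw [hprod ε hε a c ha hc]
        refine IntegrableOn.integrable_indicator ?_ measurableSet_Ioc
        exact integrableOn_const (by simp)
      · simp [hp, hc]
    · simp [hp, ha]
  · intro ε hε a
    by_cases ha : 0 < a
    · rw [hval ε hε a a ha ha le_rfl, div_self (hpos ε hε a ha).ne']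
    · simp [hp, ha]
  · intro ε hε a c ha hac
    rw [hval ε hε a c ha (ha.trans hac) (hmono ε hε a c ha hac)]

end SchurMultipliers

section Symbols
open MeasureTheory Set Filter Topology

/-- The weight `1 + a²`. -/
def zz (a : ℤ) : ℝ := 1 + (a : ℝ) ^ 2

/-- `1 + ε² a²`. -/
def ee (ε : ℝ) (a : ℤ) : ℝ := 1 + ε ^ 2 * (a : ℝ) ^ 2

/-- The symbol of `Λ^s T_ε`. -/
def mm (s ε : ℝ) (a : ℤ) : ℝ := zz a ^ (s / 2) * (ee ε a)⁻¹

theorem zz_pos (a : ℤ) : 0 < zz a := by unfold zz; positivity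
theorem one_le_zz (a : ℤ) : 1 ≤ zz a := by unfold zz; nlinarith [sq_nonneg (a : ℝ)]
theorem ee_pos (ε : ℝ) (a : ℤ) : 0 < ee ε a := by unfold ee; positivity
theorem one_le_ee (ε : ℝ) (a : ℤ) : 1 ≤ ee ε a := by unfold ee; nlinarith [sq_nonneg (ε * (a : ℝ))]
theorem mm_pos (s ε : ℝ) (a : ℤ) : 0 < mm s ε a :=
  mul_pos (Real.rpow_pos_of_pos (zz_pos a) _) (inv_pos.2 (ee_pos ε a))

theorem SM_x : SM (fun _ a c => (a : ℝ) / c) := by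
  refine SM.ratio (fun _ a => (a : ℝ)) (fun ε _ a ha => by exact_mod_cast ha) ?_
  intro ε _ a c _ hac
  exact_mod_cast hac.le

theorem SM_poly (p : Polynomial ℝ) : SM (fun _ a c => p.eval ((a : ℝ) / c)) := by
  induction p using Polynomial.induction_on' with
  | add p q hp hq => simpa using hp.add hq
  | monomial n r =>
    simp only [Polynomial.eval_monomial]
    refine (SM.const r).mul ?_
    induction n with
    | zero => simpa using SM.const 1
    | succ n ih => simpa [pow_succ] using ih.mul SM_x

theorem SM_pow (n : ℕ) : SM (fun _ a c => ((a : ℝ) / c) ^ n) := by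
  simpa using SM_poly (Polynomial.X ^ n)

theorem zz_mono {a c : ℤ} (ha : 0 < a) (hac : a < c) : zz a ≤ zz c := by
  unfold zz
  have h1 : (0 : ℝ) < a := by exact_mod_cast ha
  have h2 : (a : ℝ) < c := by exact_mod_cast hac
  nlinarith

theorem SM_zk (κ : ℝ) (k : ℕ) (hk : 2 * κ ≤ k) :
    SM (fun _ a c => ((a : ℝ) / c) ^ k * (zz c / zz a) ^ κ) := by
  refine (SM.ratio (fun _ a => (a : ℝ) ^ k * (zz a ^ κ)⁻¹) ?_ ?_).congr ?_
  · intro ε _ a ha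
    have h1 : (0 : ℝ) < a := by exact_mod_cast ha
    have := Real.rpow_pos_of_pos (zz_pos a) κ
    positivity
  · intro ε _ a c ha hac
    have h1 : (0 : ℝ) < a := by exact_mod_cast ha
    have h2 : (a : ℝ) < c := by exact_mod_cast hac
    have h3 : (0 : ℝ) < c := h1.trans h2
    have hza := zz_pos a
    have hzc := zz_pos c
    have key : (zz c / zz a) ^ κ ≤ ((c : ℝ) / a) ^ k := by
      have hca : 1 ≤ (c : ℝ) / a := (one_le_div h1).2 h2.le
      by_cases hκ : κ ≤ 0
      · exact (Real.rpow_le_one_of_one_le_of_nonpos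
          ((one_le_div hza).2 (zz_mono ha hac)) hκ).trans (one_le_pow₀ hca)
      · push Not at hκ
        have : zz c / zz a ≤ ((c : ℝ) / a) ^ (2 : ℝ) := by
          rw [Real.rpow_two, div_pow, div_le_div_iff₀ hza (by positivity)]
          unfold zz; nlinarith
        calc (zz c / zz a) ^ κ ≤ (((c : ℝ) / a) ^ (2 : ℝ)) ^ κ :=
              Real.rpow_le_rpow (by positivity) this hκ.le
          _ = ((c : ℝ) / a) ^ (2 * κ) := by rw [← Real.rpow_mul (by positivity)]
          _ ≤ ((c : ℝ) / a) ^ (k : ℝ) := Real.rpow_le_rpow_of_exponent_le hca hk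
          _ = _ := Real.rpow_natCast _ _
    rw [Real.div_rpow hzc.le hza.le, div_pow] at key
    have hA := Real.rpow_pos_of_pos hza κ
    have hC := Real.rpow_pos_of_pos hzc κ
    rw [div_le_div_iff₀ hA (by positivity)] at key
    rw [← div_eq_mul_inv, ← div_eq_mul_inv, div_le_div_iff₀ hA hC]
    linarith
  · intro ε _ a c ha hac
    have h1 : (0 : ℝ) < a := by exact_mod_cast ha
    have h2 : (a : ℝ) < c := by exact_mod_cast hac
    have h3 : (0 : ℝ) < c := h1.trans h2
    have hA := Real.rpow_pos_of_pos (zz_pos a) κ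
    have hC := Real.rpow_pos_of_pos (zz_pos c) κ
    rw [Real.div_rpow (zz_pos c).le (zz_pos a).le, div_pow]
    field_simp

theorem SM_e1 : SM (fun ε a c => ee ε a / ee ε c) := by
  refine SM.ratio (fun ε a => ee ε a) (fun ε _ a _ => ee_pos ε a) ?_
  intro ε hε a c ha hac
  have h1 : (0 : ℝ) < a := by exact_mod_cast ha
  have h2 : (a : ℝ) < c := by exact_mod_cast hac
  unfold ee; gcongr

theorem SM_e2 : SM (fun ε a c => ((a : ℝ) / c) ^ 2 * (ee ε c / ee ε a)) := by
  refine (SM.ratio (fun ε a => (a : ℝ) ^ 2 / ee ε a) ?_ ?_).congr ?_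
  · intro ε _ a ha
    have h1 : (0 : ℝ) < a := by exact_mod_cast ha
    have := ee_pos ε a
    positivity
  · intro ε hε a c ha hac
    have h1 : (0 : ℝ) < a := by exact_mod_cast ha
    have h2 : (a : ℝ) < c := by exact_mod_cast hac
    rw [div_le_div_iff₀ (ee_pos _ _) (ee_pos _ _)]
    unfold ee; nlinarith
  · intro ε _ a c ha hac
    have h1 : (0 : ℝ) < a := by exact_mod_cast ha
    have h2 : (a : ℝ) < c := by exact_mod_cast hac
    have h3 : (0 : ℝ) < c := h1.trans h2
    have := ee_pos ε a
    have := ee_pos ε c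
    field_simp

theorem SM_ze : SM (fun ε a c => (zz a / zz c) * (ee ε c / ee ε a)) := by
  refine (SM.ratio (fun ε a => zz a / ee ε a) ?_ ?_).congr ?_
  · intro ε _ a ha
    exact div_pos (zz_pos _) (ee_pos _ _)
  · intro ε hε a c ha hac
    have h1 : (0 : ℝ) < a := by exact_mod_cast ha
    have h2 : (a : ℝ) < c := by exact_mod_cast hac
    rw [div_le_div_iff₀ (ee_pos _ _) (ee_pos _ _)]
    unfold ee zz
    have h3 : (a : ℝ) ^ 2 ≤ (c : ℝ) ^ 2 := by gcongr
    have h4 : ε ^ 2 ≤ 1 := by have := hε.1; have := hε.2; nlinarith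
    nlinarith
  · intro ε _ a c ha hac
    have := ee_pos ε a
    have := ee_pos ε c
    have := zz_pos a
    have := zz_pos c
    field_simp

theorem SM_m (s : ℝ) (hs : 2 ≤ s) : SM (fun ε a c => mm s ε a / mm s ε c) := by
  refine ((SM_zk (-(s / 2 - 1)) 0 (by push_cast; linarith)).mul SM_ze).congr ?_
  intro ε _ a c ha hac
  have h1 := ee_pos ε a
  have h2 := ee_pos ε c
  have h3 := zz_pos a
  have h4 := zz_pos c
  unfold mm
  have : ∀ z : ℝ, 0 < z → z ^ (s / 2) = z ^ (s / 2 - 1) * z := fun z hz => by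
    rw [← Real.rpow_add_one hz.ne']; ring_nf
  rw [this _ h3, this _ h4, Real.rpow_neg (by positivity), Real.div_rpow h4.le h3.le]
  have h5 := Real.rpow_pos_of_pos h3 (s / 2 - 1)
  have h6 := Real.rpow_pos_of_pos h4 (s / 2 - 1)
  field_simp

/-- Loewner kernel of `y ↦ y^δ`. -/
theorem SM_loewner (δ : ℝ) (hδ : δ ∈ Ioo (0 : ℝ) 1) (y : ℤ → ℝ) (hy : ∀ a, 0 < y a)
    (hne : ∀ a c : ℤ, 0 < a → a < c → y a ≠ y c) :
    SM (fun _ a c => (y c ^ δ - y a ^ δ) / (y c - y a)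
      * (y a ^ ((1 - δ) / 2) * y c ^ ((1 - δ) / 2))) := by
  set I0 : ℝ := ∫ t in Ioi 0, Real.rpowIntegrand₀₁ δ t 1 with hI0
  have hI0pos : 0 < I0 := Real.integral_rpowIntegrand₀₁_one_pos hδ
  have hintg : ∀ a, IntegrableOn (fun t => Real.rpowIntegrand₀₁ δ t (y a)) (Ioi 0) :=
    fun a => Real.integrableOn_rpowIntegrand₀₁_Ioi hδ (hy a).le
  have hrep : ∀ a, y a ^ δ = I0⁻¹ * ∫ t in Ioi 0, Real.rpowIntegrand₀₁ δ t (y a) :=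
    fun a => Real.rpow_eq_const_mul_integral hδ (hy a).le
  -- the kernel
  set k : ℝ → ℤ → ℤ → ℝ := fun t a c => t ^ δ / ((t + y a) * (t + y c)) with hk
  have hkle : ∀ t ∈ Ioi (0 : ℝ), ∀ a c, ‖k t a c‖ ≤ (y a)⁻¹ * Real.rpowIntegrand₀₁ δ t (y a) := by
    intro t ht a c
    have ht : 0 < t := ht
    have ha := hy a
    have hc := hy c
    have hp := Real.rpow_pos_of_pos ht δ
    have e : (y a)⁻¹ * Real.rpowIntegrand₀₁ δ t (y a) = t ^ δ / ((t + y a) * t) := by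
      unfold Real.rpowIntegrand₀₁; field_simp; ring
    rw [e, Real.norm_of_nonneg (by positivity)]
    simp only [hk]
    gcongr; linarith
  have hkint : ∀ a c, IntegrableOn (fun t => k t a c) (Ioi 0) := by
    intro a c
    refine Integrable.mono' ((hintg a).const_mul (y a)⁻¹) ?_ ?_
    · refine Measurable.aestronglyMeasurable ?_
      simp only [hk]
      fun_prop
    · filter_upwards [ae_restrict_mem (measurableSet_Ioi : MeasurableSet (Ioi (0 : ℝ)))] with t ht
      exact hkle t ht a c
  have hkdiag : ∀ a, ∫ t in Ioi 0, k t a a ≤ (y a)⁻¹ * (I0 * y a ^ δ) := by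
    intro a
    have : (y a)⁻¹ * (I0 * y a ^ δ) = ∫ t in Ioi 0, (y a)⁻¹ * Real.rpowIntegrand₀₁ δ t (y a) := by
      rw [integral_const_mul, hrep a]; field_simp
    rw [this]
    refine setIntegral_mono_on (hkint a a) ((hintg a).const_mul _) measurableSet_Ioi ?_
    intro t ht
    exact (le_abs_self _).trans (hkle t ht a a)
  have hkval : ∀ a c, y c ^ δ - y a ^ δ = (y c - y a) * (I0⁻¹ * ∫ t in Ioi 0, k t a c) := by
    intro a c
    rw [hrep a, hrep c, ← mul_sub, ← integral_sub (hintg c) (hintg a), mul_left_comm,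
      ← integral_const_mul (y c - y a)]
    congr 1
    refine setIntegral_congr_fun (measurableSet_Ioi : MeasurableSet (Ioi (0 : ℝ))) fun t ht => ?_
    have ht : 0 < t := ht
    have ha := hy a
    have hc := hy c
    simp only [hk]
    unfold Real.rpowIntegrand₀₁
    field_simp; ring
  set p : ℝ → ℝ → ℤ → ℝ := fun _ t a =>
    Real.sqrt (I0⁻¹) * (t ^ (δ / 2) / (t + y a) * y a ^ ((1 - δ) / 2)) with hp
  have hpp : ∀ ε, ∀ t ∈ Ioi (0 : ℝ), ∀ a c, p ε t a * p ε t c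
      = I0⁻¹ * (y a ^ ((1 - δ) / 2) * y c ^ ((1 - δ) / 2)) * k t a c := by
    intro ε t ht a c
    have ht : 0 < t := ht
    have h1 : t ^ δ = t ^ (δ / 2) * t ^ (δ / 2) := by rw [← Real.rpow_add ht]; ring_nf
    have h2 : Real.sqrt I0⁻¹ * Real.sqrt I0⁻¹ = I0⁻¹ := Real.mul_self_sqrt (by positivity)
    simp only [hp, hk]
    have ha := hy a
    have hc := hy c
    calc _ = (Real.sqrt I0⁻¹ * Real.sqrt I0⁻¹) * ((t ^ (δ / 2) * t ^ (δ / 2))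
          / ((t + y a) * (t + y c)) * (y a ^ ((1 - δ) / 2) * y c ^ ((1 - δ) / 2))) := by
          field_simp
      _ = _ := by rw [h2, h1]; ring
  have hval : ∀ ε a c, ∫ t in Ioi 0, p ε t a * p ε t c
      = I0⁻¹ * (y a ^ ((1 - δ) / 2) * y c ^ ((1 - δ) / 2)) * ∫ t in Ioi 0, k t a c := by
    intro ε a c
    rw [← integral_const_mul]
    exact setIntegral_congr_fun measurableSet_Ioi fun t ht => hpp ε t ht a c
  refine (SM.gram (volume.restrict (Ioi 0)) p 1 ?_ ?_ zero_le_one).congr ?_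
  · intro ε _ a c
    refine ((hkint a c).const_mul (I0⁻¹ * (y a ^ ((1 - δ) / 2) * y c ^ ((1 - δ) / 2)))).congr ?_
    filter_upwards [ae_restrict_mem measurableSet_Ioi] with t ht
    rw [hpp ε t ht a c]
  · intro ε _ a
    rw [hval ε]
    have h1 : y a ^ ((1 - δ) / 2) * y a ^ ((1 - δ) / 2) * ((y a)⁻¹ * y a ^ δ) = 1 := by
      rw [← Real.rpow_neg_one (y a), ← Real.rpow_add (hy a), ← Real.rpow_add (hy a),
        ← Real.rpow_add (hy a)]
      ring_nf; simp
    have h2 : 0 ≤ I0⁻¹ * (y a ^ ((1 - δ) / 2) * y a ^ ((1 - δ) / 2)) := by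
      have := Real.rpow_pos_of_pos (hy a) ((1 - δ) / 2); positivity
    refine (mul_le_mul_of_nonneg_left (hkdiag a) h2).trans (le_of_eq ?_)
    calc _ = (I0⁻¹ * I0) * (y a ^ ((1 - δ) / 2) * y a ^ ((1 - δ) / 2) * ((y a)⁻¹ * y a ^ δ)) := by
          ring
      _ = 1 := by rw [h1, inv_mul_cancel₀ hI0pos.ne', one_mul]
  · intro ε _ a c ha hac
    have hn : y c - y a ≠ 0 := sub_ne_zero.2 (hne a c ha hac).symm
    rw [hval ε, hkval, mul_div_assoc, mul_comm (y c - y a), div_mul_cancel₀ _ hn]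
    ring

/-- Smooth partition polynomials. -/
theorem exists_partition_poly (n : ℕ) : ∃ P R Q : Polynomial ℝ,
    (∀ x, P.eval x = x ^ (n + 1) * R.eval x) ∧ (∀ x, 1 - P.eval x = (1 - x) * Q.eval x) ∧
    ∀ x, P.eval x + P.eval (1 - x) = 1 := by
  induction n with
  | zero => exact ⟨Polynomial.X, 1, 1, by simp, by simp, by simp⟩
  | succ n ih =>
    obtain ⟨P, R, Q, h1, h2, h3⟩ := ih
    refine ⟨P ^ 2 * (3 - 2 * P), Polynomial.X ^ n * R ^ 2 * (3 - 2 * P),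
      (1 - Polynomial.X) * Q ^ 2 * (1 + 2 * P), fun x => ?_, fun x => ?_, fun x => ?_⟩
    · simp only [Polynomial.eval_mul, Polynomial.eval_pow, Polynomial.eval_sub,
        Polynomial.eval_X, Polynomial.eval_ofNat]
      rw [show (Polynomial.eval x P) ^ 2 * (3 - 2 * Polynomial.eval x P)
        = (x ^ (n + 1) * R.eval x) ^ 2 * (3 - 2 * Polynomial.eval x P) by rw [h1]]
      ring
    · simp only [Polynomial.eval_mul, Polynomial.eval_pow, Polynomial.eval_sub,
        Polynomial.eval_X, Polynomial.eval_ofNat, Polynomial.eval_add, Polynomial.eval_one]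
      calc _ = (1 - P.eval x) ^ 2 * (1 + 2 * P.eval x) := by ring
        _ = _ := by rw [h2]; ring
    · simp only [Polynomial.eval_mul, Polynomial.eval_pow, Polynomial.eval_sub,
        Polynomial.eval_ofNat]
      have : P.eval (1 - x) = 1 - P.eval x := by linarith [h3 x]
      rw [this]; ring

end Symbols

section MainSymbol
open MeasureTheory Set Filter Topology

theorem term_aux (A C : ℝ) (hA : 0 < A) (hC : 0 < C) (p i : ℕ) (hi : i < p) :
    A ^ ((p : ℝ) / 2) * C ^ ((p : ℝ) / 2) * (C⁻¹ * (C / A) ^ ((i : ℝ) + 1 - p / 2))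
      = C ^ i * A ^ (p - 1 - i) := by
  rw [Real.div_rpow hC.le hA.le, div_eq_mul_inv (C ^ _), ← Real.rpow_neg hA.le, ← Real.rpow_neg_one C,
    ← Real.rpow_natCast, ← Real.rpow_natCast]
  calc _ = (C ^ ((p : ℝ) / 2) * C ^ (-1 : ℝ) * C ^ ((i : ℝ) + 1 - p / 2))
        * (A ^ ((p : ℝ) / 2) * A ^ (-((i : ℝ) + 1 - p / 2))) := by ring
    _ = _ := by
      rw [← Real.rpow_add hC, ← Real.rpow_add hC, ← Real.rpow_add hA]
      congr 2
      · ring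
      · have : ((p - 1 - i : ℕ) : ℝ) = p - 1 - i := by
          rw [Nat.sub_sub, Nat.cast_sub (by omega)]; push_cast; ring
        rw [this]; ring

/-- The divided difference of `z^s`. -/
theorem divdiff (s : ℝ) (hs : 0 < s) (p : ℕ) (hp : s < p) :
    ∃ κ : ℝ → ℤ → ℤ → ℝ, SM κ ∧ ∀ ε, ∀ a c : ℤ, 0 < a → a < c →
      zz c ^ s - zz a ^ s = (zz c - zz a) * (κ ε a c * ((zz c)⁻¹ *
        ∑ i ∈ Finset.range p, (zz c / zz a) ^ ((i : ℝ) + 1 - p / 2)))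
          * (zz a ^ (s / 2) * zz c ^ (s / 2)) := by
  have hp0 : (0 : ℝ) < p := hs.trans hp
  have hpn : p ≠ 0 := by rintro rfl; simp at hp0
  have hlt : ∀ a c : ℤ, 0 < a → a < c → zz a < zz c := by
    intro a c ha hac
    unfold zz
    have h1 : (0 : ℝ) < a := by exact_mod_cast ha
    have h2 : (a : ℝ) < c := by exact_mod_cast hac
    nlinarith
  have hplt : ∀ a c : ℤ, 0 < a → a < c → zz a ^ p < zz c ^ p := fun a c ha hac =>
    pow_lt_pow_left₀ (hlt a c ha hac) (zz_pos a).le hpn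
  have hL := SM_loewner (s / p) ⟨by positivity, (div_lt_one hp0).2 hp⟩ (fun a => zz a ^ p)
    (fun a => pow_pos (zz_pos a) p) (fun a c ha hac => (hplt a c ha hac).ne)
  refine ⟨_, hL, fun ε a c ha hac => ?_⟩
  have hA := zz_pos a
  have hC := zz_pos c
  have hne : zz c ^ p - zz a ^ p ≠ 0 := (sub_pos.2 (hplt a c ha hac)).ne'
  have e1 : ∀ z : ℝ, 0 < z → (z ^ p) ^ (s / p) = z ^ s := fun z hz => by
    rw [← Real.rpow_natCast, ← Real.rpow_mul hz.le, mul_div_cancel₀ _ hp0.ne']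
  have e2 : ∀ z : ℝ, 0 < z → (z ^ p) ^ ((1 - s / p) / 2) * z ^ (s / 2) = z ^ ((p : ℝ) / 2) :=
    fun z hz => by
    rw [← Real.rpow_natCast, ← Real.rpow_mul hz.le, ← Real.rpow_add hz]
    congr 1; field_simp; ring
  rw [e1 _ hA, e1 _ hC]
  have e3 : (zz c - zz a) * (zz a ^ ((p : ℝ) / 2) * zz c ^ ((p : ℝ) / 2) * ((zz c)⁻¹ *
        ∑ i ∈ Finset.range p, (zz c / zz a) ^ ((i : ℝ) + 1 - p / 2))) = zz c ^ p - zz a ^ p := by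
    rw [Finset.mul_sum, Finset.mul_sum, ← geom_sum₂_mul, mul_comm]
    congr 1
    exact Finset.sum_congr rfl fun i hi => term_aux _ _ hA hC p i (Finset.mem_range.1 hi)
  symm
  calc _ = (zz c ^ s - zz a ^ s) / (zz c ^ p - zz a ^ p) *
      ((zz c - zz a) * (((zz a ^ p) ^ ((1 - s / p) / 2) * zz a ^ (s / 2))
        * ((zz c ^ p) ^ ((1 - s / p) / 2) * zz c ^ (s / 2)) * ((zz c)⁻¹ *
        ∑ i ∈ Finset.range p, (zz c / zz a) ^ ((i : ℝ) + 1 - p / 2)))) := by ring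
    _ = _ := by rw [e2 _ hA, e2 _ hC, e3, div_mul_cancel₀ _ hne]

theorem symbol_identity (a c A C Ea Ec ε P R Q D xr za zc : ℝ) (ha : 0 < a) (hac : a < c)
    (hA : 0 < A) (hC : 0 < C)
    (hEa : Ea = 1 + ε ^ 2 * a ^ 2) (hEc : Ec = 1 + ε ^ 2 * c ^ 2)
    (hza : za = 1 + a ^ 2) (hzc : zc = 1 + c ^ 2)
    (hD : C ^ 2 - A ^ 2 = (zc - za) * D * (A * C))
    (hP : P = xr * R) (hQ : 1 - P = (1 - a / c) * Q) :
    (P * (c * (C * Ec⁻¹) ^ 2) - (a + 2 * (c - a)) * (A * Ea⁻¹) ^ 2)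
        / ((c - a) * (A * Ea⁻¹) * (C * Ec⁻¹))
      = R * (xr * (C / A)) * (Ea / Ec)
        + (-1) * (R * (xr * (C / A)) * ((a / c + (a / c) ^ 2) * (ε ^ 2 * c ^ 2 / Ec)))
        + (-1) * (R * (xr * (C / A)) * ((c + a) / a * (ε ^ 2 * a ^ 2 / Ea)))
        + R * (a / c + (a / c) ^ 2) * (xr * (Ec / Ea) * (c ^ 2 * D))
        + (-1) * (Q * (a / c) * ((A * Ea⁻¹) / (C * Ec⁻¹)))
        + (-2) * ((A * Ea⁻¹) / (C * Ec⁻¹)) := by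
  have hc : 0 < c := ha.trans hac
  have hb : 0 < c - a := sub_pos.2 hac
  have hEa0 : 0 < Ea := by rw [hEa]; positivity
  have hEc0 : 0 < Ec := by rw [hEc]; positivity
  have hbz : zc - za = (c - a) * (c + a) := by rw [hza, hzc]; ring
  have hE : Ec - Ea = ε ^ 2 * ((c - a) * (c + a)) := by rw [hEa, hEc]; ring
  have hQ' : c * (1 - P) = (c - a) * Q := by rw [hQ]; field_simp
  have h1 : P * (c * (C * Ec⁻¹) ^ 2) - (a + 2 * (c - a)) * (A * Ea⁻¹) ^ 2
      = P * ((c - a) * (C * Ec⁻¹) ^ 2) + P * a * (C ^ 2 * (Ec⁻¹ ^ 2 - Ea⁻¹ ^ 2))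
        + P * a * ((C ^ 2 - A ^ 2) * Ea⁻¹ ^ 2)
        - (1 - P) * (a * (A * Ea⁻¹) ^ 2) - 2 * (c - a) * (A * Ea⁻¹) ^ 2 := by ring
  have h2 : Ec⁻¹ ^ 2 - Ea⁻¹ ^ 2
      = - (Ec⁻¹ * Ea⁻¹ * (ε ^ 2 * ((c - a) * (c + a))) * (Ec⁻¹ + Ea⁻¹)) := by
    rw [← hE]; field_simp; ring
  have h3 : 1 - P = (c - a) * (Q / c) := by field_simp; linarith
  rw [h1, h2, h3, hD, hbz, hP]
  field_simp
  ring

theorem main_symbol (s : ℝ) (hs : 2 ≤ s) : ∃ P : Polynomial ℝ,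
    (∀ x, P.eval x + P.eval (1 - x) = 1) ∧
    SM (fun ε a c => (P.eval ((a : ℝ) / c) * (c * mm s ε c ^ 2)
      - ((a : ℝ) + 2 * (c - a)) * mm s ε a ^ 2) / (((c : ℝ) - a) * mm s ε a * mm s ε c)) := by
  obtain ⟨p, hp⟩ : ∃ p : ℕ, s < p := exists_nat_gt s
  obtain ⟨κ, hκ, hκe⟩ := divdiff s (by linarith) p hp
  obtain ⟨P, R, Q, h1, h2, h3⟩ := exists_partition_poly (p + 1)
  refine ⟨P, h3, ?_⟩
  have hR := SM_poly R
  have hQ := SM_poly Q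
  have hx2 : SM (fun _ a c => (a : ℝ) / c + ((a : ℝ) / c) ^ 2) := SM_x.add (SM_pow 2)
  have hρ : SM (fun _ a c => ((a : ℝ) / c) ^ (p + 2) * (zz c / zz a) ^ (s / 2)) :=
    SM_zk _ _ (by push_cast; linarith)
  have hρ' : SM (fun _ a c => ((a : ℝ) / c) ^ (p + 1) * (zz c / zz a) ^ (s / 2)) :=
    SM_zk _ _ (by push_cast; linarith)
  have t1 := (hR.mul hρ).mul SM_e1
  have hd1 : SM (fun ε (_ : ℤ) c => ε ^ 2 * (c : ℝ) ^ 2 / ee ε c) := by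
    refine SM.right (D := 1) (fun ε c => ε ^ 2 * (c : ℝ) ^ 2 / ee ε c) ?_
    intro ε _ c
    rw [abs_of_nonneg (div_nonneg (by positivity) (ee_pos _ _).le), div_le_one (ee_pos _ _)]
    unfold ee; linarith
  have hd2 : SM (fun ε a (_ : ℤ) => ε ^ 2 * (a : ℝ) ^ 2 / ee ε a) := by
    refine SM.left (D := 1) (fun ε c => ε ^ 2 * (c : ℝ) ^ 2 / ee ε c) ?_
    intro ε _ c
    rw [abs_of_nonneg (div_nonneg (by positivity) (ee_pos _ _).le), div_le_one (ee_pos _ _)]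
    unfold ee; linarith
  have hd3 : SM (fun _ (_ : ℤ) c => (c : ℝ) ^ 2 / zz c) := by
    refine SM.right (D := 1) (fun ε c => (c : ℝ) ^ 2 / zz c) ?_
    intro ε _ c
    rw [abs_of_nonneg (div_nonneg (by positivity) (zz_pos _).le), div_le_one (zz_pos _)]
    unfold zz; linarith
  have t2 := (SM.const (-1)).mul ((hR.mul hρ).mul (hx2.mul hd1))
  have t3 := (SM.const (-1)).mul ((hR.mul hρ').mul (((SM.const 1).add SM_x).mul hd2))
  have hsum : SM (fun _ a c => ∑ i ∈ Finset.range p,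
      ((a : ℝ) / c) ^ p * (zz c / zz a) ^ ((i : ℝ) + 1 - p / 2)) := by
    refine SM.sum (fun i _ a c => ((a : ℝ) / c) ^ p * (zz c / zz a) ^ ((i : ℝ) + 1 - p / 2)) ?_
    intro i hi
    refine SM_zk _ _ ?_
    have : (i : ℝ) + 1 ≤ p := by exact_mod_cast hi
    linarith
  have t4 := (hR.mul hx2).mul (((SM_e2.mul hκ).mul hd3).mul hsum)
  have t5 := (SM.const (-1)).mul ((hQ.mul SM_x).mul (SM_m s hs))
  have t6 := (SM.const (-2)).mul (SM_m s hs)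
  refine (((((t1.add t2).add t3).add t4).add t5).add t6).congr ?_
  intro ε hε a c ha hac
  have h1' : (0 : ℝ) < a := by exact_mod_cast ha
  have h2' : (a : ℝ) < c := by exact_mod_cast hac
  have h3' : (0 : ℝ) < c := h1'.trans h2'
  have hA := zz_pos a
  have hC := zz_pos c
  have hA' := Real.rpow_pos_of_pos hA (s / 2)
  have hC' := Real.rpow_pos_of_pos hC (s / 2)
  have hsq : ∀ z : ℝ, 0 < z → (z ^ (s / 2)) ^ 2 = z ^ s := fun z hz => by
    rw [← Real.rpow_natCast, ← Real.rpow_mul hz.le]; congr 1; push_cast; ring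
  have hD := hκe ε a c ha hac
  rw [← hsq _ hA, ← hsq _ hC] at hD
  have key := symbol_identity a c (zz a ^ (s / 2)) (zz c ^ (s / 2)) (ee ε a) (ee ε c) ε
    (P.eval ((a : ℝ) / c)) (R.eval ((a : ℝ) / c)) (Q.eval ((a : ℝ) / c)) _
    (((a : ℝ) / c) ^ (p + 1 + 1)) (zz a) (zz c) h1' h2' hA' hC' rfl rfl rfl rfl hD (h1 _) (h2 _)
  unfold mm
  rw [key, Real.div_rpow hC.le hA.le, ← Finset.mul_sum]
  have hEa := ee_pos ε a
  have hEc := ee_pos ε c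
  generalize (∑ i ∈ Finset.range p, (zz c / zz a) ^ ((i : ℝ) + 1 - p / 2)) = S
  have hx1 : (1 : ℝ) + (a : ℝ) / c = ((a : ℝ) / c) * ((c + a) / a) := by field_simp; try ring
  rw [hx1]
  ring

end MainSymbol

section Toeplitz
open MeasureTheory Set Filter Topology

/-- The exponential `e^{i n x}`. -/
def ex (n : ℤ) (x : ℝ) : ℂ := Complex.exp (Complex.I * (n : ℂ) * (x : ℂ))

theorem ex_cont (n : ℤ) : Continuous (ex n) := by unfold ex; fun_prop

theorem ex_add (m n : ℤ) (x : ℝ) : ex m x * ex n x = ex (m + n) x := by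
  unfold ex; rw [← Complex.exp_add]; congr 1; push_cast; ring

theorem ex_norm (n : ℤ) (x : ℝ) : ‖ex n x‖ = 1 := by
  unfold ex
  have : Complex.I * (n : ℂ) * (x : ℂ) = ((n * x : ℝ) : ℂ) * Complex.I := by push_cast; ring
  rw [this, Complex.norm_exp_ofReal_mul_I]

theorem ex_conj (n : ℤ) (x : ℝ) : (starRingEnd ℂ) (ex n x) = ex (-n) x := by
  unfold ex
  rw [← Complex.exp_conj]
  congr 1
  simp

theorem ex_integral (n : ℤ) :
    ∫ x in (0 : ℝ)..(2 * Real.pi), ex n x = if n = 0 then (2 * Real.pi : ℂ) else 0 := by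
  split_ifs with h
  · subst h; simp [ex]
  · unfold ex
    have hc : Complex.I * (n : ℂ) ≠ 0 := mul_ne_zero Complex.I_ne_zero (by exact_mod_cast h)
    rw [integral_exp_mul_complex hc]
    have : Complex.I * (n : ℂ) * ((2 * Real.pi : ℝ) : ℂ) = n * (2 * Real.pi * Complex.I) := by
      push_cast; ring
    rw [this, Complex.exp_int_mul_two_pi_mul_I]
    simp

theorem trig_sq (F : Finset ℤ) (u : ℤ → ℂ) (σ : ℤ → ℤ) (hσ : Function.Injective σ) :
    ∫ x in (0 : ℝ)..(2 * Real.pi), ‖∑ a ∈ F, u a * ex (σ a) x‖ ^ 2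
      = 2 * Real.pi * ∑ a ∈ F, ‖u a‖ ^ 2 := by
  have key : ∀ x : ℝ, ((‖∑ a ∈ F, u a * ex (σ a) x‖ ^ 2 : ℝ) : ℂ)
      = ∑ a ∈ F, ∑ b ∈ F, (u a * (starRingEnd ℂ) (u b)) * ex (σ a - σ b) x := by
    intro x
    push_cast
    rw [← Complex.mul_conj', map_sum, Finset.sum_mul_sum]
    refine Finset.sum_congr rfl fun a _ => Finset.sum_congr rfl fun b _ => ?_
    rw [map_mul, ex_conj, sub_eq_add_neg, ← ex_add]; ring
  have h2 : ((∫ x in (0 : ℝ)..(2 * Real.pi), ‖∑ a ∈ F, u a * ex (σ a) x‖ ^ 2 : ℝ) : ℂ)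
      = ((2 * Real.pi * ∑ a ∈ F, ‖u a‖ ^ 2 : ℝ) : ℂ) := by
    rw [← intervalIntegral.integral_ofReal]
    simp_rw [key]
    rw [intervalIntegral.integral_finsetSum]
    · push_cast
      rw [Finset.mul_sum]
      refine Finset.sum_congr rfl fun a ha => ?_
      rw [intervalIntegral.integral_finsetSum]
      · rw [Finset.sum_eq_single a]
        · rw [intervalIntegral.integral_const_mul, ex_integral, if_pos (by ring),
            Complex.mul_conj']
          ring
        · intro b _ hb
          rw [intervalIntegral.integral_const_mul, ex_integral, if_neg, mul_zero]
          intro h; exact hb (hσ (by omega))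
        · intro h; exact absurd ha h
      · intro b _
        exact (Continuous.intervalIntegrable (continuous_const.mul (ex_cont _)) _ _)
    · intro b _
      refine Continuous.intervalIntegrable ?_ _ _
      exact continuous_finsetSum _ fun c _ => continuous_const.mul (ex_cont _)
  exact_mod_cast h2

theorem toeplitz (G : ℤ → ℂ) (hG : Summable fun b => ‖G b‖) (A : ℝ)
    (hA : ∀ x, ‖FC.eval G x‖ ≤ A) : MBdd (fun a c => G (c - a)) A := by
  intro F u v
  have hA0 : 0 ≤ A := (norm_nonneg _).trans (hA 0)
  set U : ℝ → ℂ := fun x => ∑ a ∈ F, u a * ex a x with hU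
  set V : ℝ → ℂ := fun x => ∑ c ∈ F, v c * ex (-c) x with hV
  have cU : Continuous U := continuous_finsetSum _ fun c _ => continuous_const.mul (ex_cont _)
  have cV : Continuous V := continuous_finsetSum _ fun c _ => continuous_const.mul (ex_cont _)
  have nU : ∀ x, ‖U x‖ ≤ ∑ a ∈ F, ‖u a‖ := fun x => by
    refine (norm_sum_le _ _).trans (Finset.sum_le_sum fun a _ => ?_)
    rw [norm_mul, ex_norm, mul_one]
  have nV : ∀ x, ‖V x‖ ≤ ∑ a ∈ F, ‖v a‖ := fun x => by
    refine (norm_sum_le _ _).trans (Finset.sum_le_sum fun a _ => ?_)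
    rw [norm_mul, ex_norm, mul_one]
  have hsx : ∀ x, HasSum (fun b => G b * ex b x * (U x * V x)) (FC.eval G x * (U x * V x)) := by
    intro x
    refine HasSum.mul_right _ ?_
    unfold FC.eval
    refine Summable.hasSum ?_
    refine Summable.of_norm ?_
    refine hG.congr fun b => ?_
    rw [norm_mul, ex_norm, mul_one]
  have h1 := intervalIntegral.hasSum_integral_of_dominated_convergence (μ := volume)
    (a := 0) (b := 2 * Real.pi)
    (F := fun b x => G b * ex b x * (U x * V x)) (f := fun x => FC.eval G x * (U x * V x))
    (fun b _ => ‖G b‖ * ((∑ a ∈ F, ‖u a‖) * ∑ a ∈ F, ‖v a‖))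
    (fun b => (((continuous_const.mul (ex_cont b)).mul (cU.mul cV))).aestronglyMeasurable)
    (fun b => Eventually.of_forall fun x _ => by
      rw [norm_mul, norm_mul, ex_norm, mul_one, norm_mul]
      have := nU x; have := nV x
      gcongr)
    (Eventually.of_forall fun x _ => hG.mul_right _)
    (by simp)
    (Eventually.of_forall fun x _ => hsx x)
  have h2 : ∀ b, ∫ x in (0 : ℝ)..(2 * Real.pi), G b * ex b x * (U x * V x)
      = ∑ a ∈ F, ∑ c ∈ F, if b = c - a then 2 * Real.pi * (G (c - a) * (u a * v c)) else 0 := by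
    intro b
    have : ∀ x, G b * ex b x * (U x * V x)
        = ∑ a ∈ F, ∑ c ∈ F, G b * (u a * v c) * ex (b + a - c) x := by
      intro x
      rw [hU, hV]
      simp only []
      rw [Finset.sum_mul_sum, Finset.mul_sum]
      refine Finset.sum_congr rfl fun a _ => ?_
      rw [Finset.mul_sum]
      refine Finset.sum_congr rfl fun c _ => ?_
      rw [sub_eq_add_neg, ← ex_add, ← ex_add]; ring
    simp_rw [this]
    rw [intervalIntegral.integral_finsetSum]
    · refine Finset.sum_congr rfl fun a ha => ?_
      rw [intervalIntegral.integral_finsetSum]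
      · refine Finset.sum_congr rfl fun c hc => ?_
        rw [intervalIntegral.integral_const_mul, ex_integral]
        by_cases h : b = c - a
        · rw [if_pos (by omega), if_pos h, h]; ring
        · rw [if_neg (by omega), if_neg h, mul_zero]
      · intro b _
        exact (Continuous.intervalIntegrable (continuous_const.mul (ex_cont _)) _ _)
    · intro b _
      refine Continuous.intervalIntegrable ?_ _ _
      exact continuous_finsetSum _ fun c _ => continuous_const.mul (ex_cont _)
  simp_rw [h2] at h1
  have h3 : HasSum (fun b : ℤ => ∑ a ∈ F, ∑ c ∈ F,
      if b = c - a then 2 * (Real.pi : ℂ) * (G (c - a) * (u a * v c)) else 0)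
      (∑ a ∈ F, ∑ c ∈ F, 2 * (Real.pi : ℂ) * (G (c - a) * (u a * v c))) := by
    refine hasSum_sum fun a _ => hasSum_sum fun c _ => ?_
    exact hasSum_ite_eq _ _
  have h4 := h3.unique h1
  have h5 : ‖∫ x in (0 : ℝ)..(2 * Real.pi), FC.eval G x * (U x * V x)‖
      ≤ ∫ x in (0 : ℝ)..(2 * Real.pi), A / 2 * (‖U x‖ ^ 2 + ‖V x‖ ^ 2) := by
    refine intervalIntegral.norm_integral_le_of_norm_le (by positivity) ?_ ?_
    · refine Eventually.of_forall fun x _ => ?_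
      rw [norm_mul, norm_mul]
      have := hA x
      have h7 : ‖U x‖ * ‖V x‖ ≤ (‖U x‖ ^ 2 + ‖V x‖ ^ 2) / 2 := by
        nlinarith [sq_nonneg (‖U x‖ - ‖V x‖)]
      calc _ ≤ A * ((‖U x‖ ^ 2 + ‖V x‖ ^ 2) / 2) := by gcongr
        _ = _ := by ring
    · refine Continuous.intervalIntegrable ?_ _ _
      fun_prop
  have e1 := trig_sq F u (fun a => a) (fun a b h => h)
  have e2 := trig_sq F v (fun a => -a) neg_injective
  rw [intervalIntegral.integral_const_mul, intervalIntegral.integral_add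
    (Continuous.intervalIntegrable (by fun_prop) _ _)
    (Continuous.intervalIntegrable (by fun_prop) _ _)] at h5
  have e1' : ∫ x in (0 : ℝ)..(2 * Real.pi), ‖U x‖ ^ 2 = 2 * Real.pi * ∑ a ∈ F, ‖u a‖ ^ 2 := e1
  have e2' : ∫ x in (0 : ℝ)..(2 * Real.pi), ‖V x‖ ^ 2 = 2 * Real.pi * ∑ a ∈ F, ‖v a‖ ^ 2 := e2
  rw [e1', e2', ← h4] at h5
  simp_rw [← Finset.mul_sum] at h5
  rw [norm_mul] at h5
  have hn : ‖(2 * (Real.pi : ℂ))‖ = 2 * Real.pi := by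
    simp [abs_of_pos Real.pi_pos]
  rw [hn] at h5
  have hp : 0 < 2 * Real.pi := by positivity
  refine le_of_mul_le_mul_left (h5.trans (le_of_eq (by ring))) hp

end Toeplitz

section SumTools
open MeasureTheory Set Filter Topology

theorem summable_zinv : Summable fun a : ℤ => (zz a)⁻¹ := by
  have h := (Real.summable_one_div_int_pow (p := 2)).2 (by norm_num)
  have h2 : Summable fun a : ℤ => if a = 0 then (1 : ℝ) else 0 :=
    (hasSum_ite_eq (0 : ℤ) (1 : ℝ)).summable
  refine Summable.of_nonneg_of_le (fun a => (inv_pos.2 (zz_pos a)).le) (fun a => ?_) (h.add h2)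
  by_cases ha : a = 0
  · subst ha; simp [zz]
  · rw [if_neg ha, add_zero, one_div]
    have : (0 : ℝ) < (a : ℝ) ^ 2 := by positivity
    unfold zz
    exact inv_anti₀ this (by linarith)

theorem zinv_le_one (a : ℤ) : (zz a)⁻¹ ≤ 1 := inv_le_one_of_one_le₀ (one_le_zz a)

theorem summable_zinv_sq : Summable fun a : ℤ => (zz a)⁻¹ ^ 2 := by
  refine Summable.of_nonneg_of_le (fun a => by positivity) (fun a => ?_) summable_zinv
  have h1 := zinv_le_one a
  have h2 := (inv_pos.2 (zz_pos a)).le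
  nlinarith

/-- The shear `(i, k) ↦ (i, k + σ i)`. -/
def shear {ι : Type*} (σ : ι → ℤ) : ι × ℤ ≃ ι × ℤ where
  toFun := fun q => (q.1, q.2 + σ q.1)
  invFun := fun q => (q.1, q.2 - σ q.1)
  left_inv := fun q => by simp
  right_inv := fun q => by simp

theorem conv_sum {ι : Type*} (α : ι → ℝ) (hα : Summable α) (h0 : ∀ i, 0 ≤ α i) (σ : ι → ℤ)
    (u v : ℤ → ℝ) (hu : Summable fun k => u k ^ 2) (hv : Summable fun k => v k ^ 2)
    (hu0 : ∀ k, 0 ≤ u k) (hv0 : ∀ k, 0 ≤ v k) :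
    Summable (fun q : ι × ℤ => α q.1 * (u q.2 * v (q.2 + σ q.1))) ∧
    ∑' q : ι × ℤ, α q.1 * (u q.2 * v (q.2 + σ q.1))
      ≤ (∑' i, α i) * ((∑' k, u k ^ 2 + ∑' k, v k ^ 2) / 2) := by
  have s1 : Summable fun q : ι × ℤ => α q.1 * u q.2 ^ 2 :=
    hα.mul_of_nonneg hu h0 (fun k => sq_nonneg _)
  have s2 : Summable fun q : ι × ℤ => α q.1 * v q.2 ^ 2 :=
    hα.mul_of_nonneg hv h0 (fun k => sq_nonneg _)
  have s3 : Summable fun q : ι × ℤ => α q.1 * v (q.2 + σ q.1) ^ 2 :=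
    ((shear σ).summable_iff (f := fun q : ι × ℤ => α q.1 * v q.2 ^ 2)).2 s2
  have t3 : ∑' q : ι × ℤ, α q.1 * v (q.2 + σ q.1) ^ 2 = ∑' q : ι × ℤ, α q.1 * v q.2 ^ 2 :=
    (shear σ).tsum_eq (fun q : ι × ℤ => α q.1 * v q.2 ^ 2)
  have t1 : ∑' q : ι × ℤ, α q.1 * u q.2 ^ 2 = (∑' i, α i) * ∑' k, u k ^ 2 :=
    (hα.tsum_mul_tsum hu s1).symm
  have t2 : ∑' q : ι × ℤ, α q.1 * v q.2 ^ 2 = (∑' i, α i) * ∑' k, v k ^ 2 :=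
    (hα.tsum_mul_tsum hv s2).symm
  have hle : ∀ q : ι × ℤ, α q.1 * (u q.2 * v (q.2 + σ q.1))
      ≤ (α q.1 * u q.2 ^ 2 + α q.1 * v (q.2 + σ q.1) ^ 2) / 2 := by
    intro q
    have := h0 q.1
    nlinarith [mul_nonneg this (sq_nonneg (u q.2 - v (q.2 + σ q.1)))]
  have hs := (s1.add s3).div_const 2
  have hS : Summable (fun q : ι × ℤ => α q.1 * (u q.2 * v (q.2 + σ q.1))) :=
    Summable.of_nonneg_of_le
      (fun q => mul_nonneg (h0 _) (mul_nonneg (hu0 _) (hv0 _))) hle hs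
  refine ⟨hS, ?_⟩
  refine (hS.tsum_le_tsum hle hs).trans (le_of_eq ?_)
  rw [tsum_div_const, s1.tsum_add s3, t3, t1, t2]; ring

/-- `z_k^{s/2} |θ_k|`. -/
def ww (s : ℝ) (θ : FC) (k : ℤ) : ℝ := zz k ^ (s / 2) * ‖θ k‖

theorem ww_nonneg (s : ℝ) (θ : FC) (k : ℤ) : 0 ≤ ww s θ k :=
  mul_nonneg (Real.rpow_nonneg (zz_pos k).le _) (norm_nonneg _)

theorem ww_sq (s : ℝ) (θ : FC) (k : ℤ) : ww s θ k ^ 2 = FC.wt s k * ‖θ k‖ ^ 2 := by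
  unfold ww FC.wt
  rw [mul_pow, ← Real.rpow_natCast, ← Real.rpow_mul (zz_pos k).le]
  unfold zz
  congr 2
  push_cast; ring

theorem ww_summable {s : ℝ} {θ : FC} (h : FC.memHs s θ) : Summable fun k => ww s θ k ^ 2 := by
  simp_rw [ww_sq]; exact h

theorem hsNorm_sq (s : ℝ) (θ : FC) : FC.hsNorm s θ ^ 2 = ∑' k, ww s θ k ^ 2 := by
  unfold FC.hsNorm
  rw [Real.sq_sqrt]
  · simp_rw [ww_sq]
  · refine tsum_nonneg fun k => ?_
    rw [← ww_sq]; positivity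

theorem ww_le {s : ℝ} {θ : FC} (h : FC.memHs s θ) (k : ℤ) : ww s θ k ≤ FC.hsNorm s θ := by
  have h1 : ww s θ k ^ 2 ≤ FC.hsNorm s θ ^ 2 := by
    rw [hsNorm_sq]
    exact (ww_summable h).le_tsum k (fun j _ => sq_nonneg _)
  exact le_of_sq_le_sq h1 (Real.sqrt_nonneg _) 

theorem l1_summable {s t : ℝ} {θ : FC} (h : FC.memHs s θ) (hts : t ≤ s / 2 - 1) :
    Summable fun k => zz k ^ t * ‖θ k‖ := by
  have hs := ((summable_zinv_sq).add (ww_summable h)).div_const 2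
  refine Summable.of_nonneg_of_le
    (fun k => mul_nonneg (Real.rpow_nonneg (zz_pos k).le _) (norm_nonneg _)) (fun k => ?_) hs
  have h1 : zz k ^ t ≤ (zz k)⁻¹ * zz k ^ (s / 2) := by
    rw [← Real.rpow_neg_one, ← Real.rpow_add (zz_pos k)]
    exact Real.rpow_le_rpow_of_exponent_le (one_le_zz k) (by linarith)
  have h2 : zz k ^ t * ‖θ k‖ ≤ (zz k)⁻¹ * ww s θ k := by
    unfold ww
    calc _ ≤ (zz k)⁻¹ * zz k ^ (s / 2) * ‖θ k‖ := by gcongr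
      _ = _ := by ring
  nlinarith [sq_nonneg ((zz k)⁻¹ - ww s θ k)]

theorem zz_peetre (x t : ℤ) : zz (x + t) ≤ 2 * zz t * zz x := by
  unfold zz
  push_cast
  nlinarith [sq_nonneg ((x : ℝ) - t), sq_nonneg ((x : ℝ) * t)]

theorem zz_neg (x : ℤ) : zz (-x) = zz x := by unfold zz; push_cast; ring
theorem ee_neg (ε : ℝ) (x : ℤ) : ee ε (-x) = ee ε x := by unfold ee; push_cast; ring
theorem mm_neg (s ε : ℝ) (x : ℤ) : mm s ε (-x) = mm s ε x := by
  unfold mm; rw [zz_neg, ee_neg]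

theorem mm_le (s ε : ℝ) (k : ℤ) : mm s ε k ≤ zz k ^ (s / 2) := by
  unfold mm
  have := inv_le_one_of_one_le₀ (one_le_ee ε k)
  have h2 := Real.rpow_nonneg (zz_pos k).le (s / 2)
  nlinarith

theorem ee_ge {ε : ℝ} (hε : ε ∈ Ioo (0 : ℝ) 1) (k : ℤ) : ε ^ 2 * zz k ≤ ee ε k := by
  unfold ee zz
  have : ε ^ 2 ≤ 1 := by nlinarith [hε.1, hε.2]
  nlinarith

theorem mm_sq_le (s : ℝ) {ε : ℝ} (hε : ε ∈ Ioo (0 : ℝ) 1) (k : ℤ) :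
    mm s ε k ^ 2 ≤ (ε ^ 2)⁻¹ * (zz k ^ (s / 2) * zz k ^ (s / 2 - 1)) := by
  have h1 := inv_le_one_of_one_le₀ (one_le_ee ε k)
  have hz := zz_pos k
  have he := ee_pos ε k
  have hε0 : 0 < ε ^ 2 := by have := hε.1; positivity
  have h2 : (ee ε k)⁻¹ ≤ (ε ^ 2)⁻¹ * (zz k)⁻¹ := by
    rw [← mul_inv]
    exact inv_anti₀ (by positivity) (ee_ge hε k)
  have h3 : zz k ^ (s / 2 - 1) = zz k ^ (s / 2) * (zz k)⁻¹ := by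
    rw [Real.rpow_sub_one hz.ne']; rfl
  have h4 : (ee ε k)⁻¹ ^ 2 ≤ (ε ^ 2)⁻¹ * (zz k)⁻¹ := by
    have := (inv_pos.2 he).le
    nlinarith
  unfold mm
  rw [h3, mul_pow]
  have := Real.rpow_nonneg hz.le (s / 2)
  calc (zz k ^ (s / 2)) ^ 2 * (ee ε k)⁻¹ ^ 2
      ≤ (zz k ^ (s / 2)) ^ 2 * ((ε ^ 2)⁻¹ * (zz k)⁻¹) := by gcongr
    _ = _ := by ring

theorem abs_le_zz_half (k : ℤ) : |(k : ℝ)| ≤ zz k ^ ((1 : ℝ) / 2) := by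
  rw [← Real.sqrt_eq_rpow]
  refine Real.abs_le_sqrt ?_
  unfold zz; linarith

theorem mm_sq_eq (s ε : ℝ) (k : ℤ) :
    FC.wt s k * ((1 + ε ^ 2 * (k : ℝ) ^ 2)⁻¹) ^ 2 = mm s ε k ^ 2 := by
  unfold mm FC.wt ee
  rw [mul_pow, ← Real.rpow_natCast (zz k ^ (s / 2)), ← Real.rpow_mul (zz_pos k).le]
  unfold zz
  congr 2
  push_cast; ring

end SumTools

section RegionSplit
open MeasureTheory Set Filter Topology

/-- The positive quadrant. -/
def QQ : Set (ℤ × ℤ) := {q | 0 < q.1 ∧ 0 < q.2}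

theorem region_reindex (f : ℤ × ℤ → ℝ) (hf : Summable f) (e : ℤ × ℤ ≃ ℤ × ℤ) (R : Set (ℤ × ℤ))
    (hR : ∀ q, e q ∈ R ↔ q ∈ QQ) :
    HasSum (QQ.indicator (fun q => f (e q))) (∑' q, R.indicator f q) := by
  have h1 : HasSum (R.indicator f) (∑' q, R.indicator f q) := (hf.indicator R).hasSum
  have h2 := (e.hasSum_iff).2 h1
  convert h2 using 1
  funext q
  by_cases h : q ∈ QQ
  · have := (hR q).2 h
    simp [h, this]
  · have : e q ∉ R := fun h' => h ((hR q).1 h')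
    simp [h, this]

def eq2 : ℤ × ℤ ≃ ℤ × ℤ where
  toFun := fun q => (-q.1, -q.2)
  invFun := fun q => (-q.1, -q.2)
  left_inv := fun q => by simp
  right_inv := fun q => by simp

def eq3 : ℤ × ℤ ≃ ℤ × ℤ where
  toFun := fun q => (q.1 + q.2, -q.2)
  invFun := fun q => (q.1 + q.2, -q.2)
  left_inv := fun q => by simp
  right_inv := fun q => by simp

def eq4 : ℤ × ℤ ≃ ℤ × ℤ where
  toFun := fun q => (q.2, -q.1 - q.2)
  invFun := fun q => (-q.1 - q.2, q.1)
  left_inv := fun q => by ext <;> simp <;> ring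
  right_inv := fun q => by ext <;> simp

def eq5 : ℤ × ℤ ≃ ℤ × ℤ where
  toFun := fun q => (-q.2, q.1 + q.2)
  invFun := fun q => (q.1 + q.2, -q.1)
  left_inv := fun q => by simp
  right_inv := fun q => by simp

def eq6 : ℤ × ℤ ≃ ℤ × ℤ where
  toFun := fun q => (-q.1 - q.2, q.2)
  invFun := fun q => (-q.1 - q.2, q.2)
  left_inv := fun q => by simp
  right_inv := fun q => by simp

theorem region_split (f : ℤ × ℤ → ℝ) (hf : Summable f) (h0 : ∀ a, f (a, 0) = 0)
    (h0' : ∀ b, f (0, b) = 0) :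
    HasSum (QQ.indicator (fun q => f q + f (-q.1, -q.2) + f (q.1 + q.2, -q.2)
      + f (q.2, -q.1 - q.2) + f (-q.2, q.1 + q.2) + f (-q.1 - q.2, q.2)))
      (∑' q, f q - ∑' a, f (a, -a)) := by
  set R2 : Set (ℤ × ℤ) := {q | q.1 < 0 ∧ q.2 < 0} with hR2
  set R3 : Set (ℤ × ℤ) := {q | q.2 < 0 ∧ 0 < q.1 + q.2} with hR3
  set R4 : Set (ℤ × ℤ) := {q | 0 < q.1 ∧ q.1 + q.2 < 0} with hR4
  set R5 : Set (ℤ × ℤ) := {q | q.1 < 0 ∧ 0 < q.1 + q.2} with hR5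
  set R6 : Set (ℤ × ℤ) := {q | 0 < q.2 ∧ q.1 + q.2 < 0} with hR6
  set R0 : Set (ℤ × ℤ) := {q | q.1 + q.2 = 0} with hR0
  have k1 := region_reindex f hf (Equiv.refl _) QQ (fun q => Iff.rfl)
  have k2 := region_reindex f hf eq2 R2 (fun q => by simp [hR2, eq2, QQ])
  have k3 := region_reindex f hf eq3 R3 (fun q => by simp [hR3, eq3, QQ]; omega)
  have k4 := region_reindex f hf eq4 R4 (fun q => by simp [hR4, eq4, QQ]; omega)
  have k5 := region_reindex f hf eq5 R5 (fun q => by simp [hR5, eq5, QQ]; omega)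
  have k6 := region_reindex f hf eq6 R6 (fun q => by simp [hR6, eq6, QQ]; omega)
  have hpt : ∀ q, f q = QQ.indicator f q + R2.indicator f q + R3.indicator f q
      + R4.indicator f q + R5.indicator f q + R6.indicator f q + R0.indicator f q := by
    rintro ⟨a, b⟩
    simp only [Set.indicator_apply, QQ, hR2, hR3, hR4, hR5, hR6, hR0, Set.mem_ofPred_eq]
    by_cases ha : a = 0
    · subst ha; simp [h0']
    by_cases hb : b = 0
    · subst hb; simp [h0]
    rcases lt_or_gt_of_ne ha with h1 | h1 <;> rcases lt_or_gt_of_ne hb with h2 | h2 <;>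
      rcases lt_trichotomy (a + b) 0 with h3 | h3 | h3 <;>
      first
        | (exfalso; omega)
        | (simp [h1, h2, h3, h1.not_gt, h2.not_gt, h3.not_gt, h3.ne']; done)
        | (simp [h1, h2, h3, h1.not_gt, h2.not_gt, h3.not_gt, h3.ne]; done)
        | (simp [h1, h2, h3, h1.not_gt, h2.not_gt]; done)
  have hk0 : ∑' q, R0.indicator f q = ∑' a, f (a, -a) := by
    have hinj : Function.Injective (fun a : ℤ => (a, -a)) := fun a b h => (Prod.ext_iff.1 h).1
    rw [← hinj.tsum_eq]
    · refine tsum_congr fun a => ?_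
      simp [hR0]
    · intro q hq
      have : q ∈ R0 := by
        by_contra hc; simp [hc] at hq
      refine ⟨q.1, ?_⟩
      have h5 : q.1 + q.2 = 0 := this
      ext <;> simp; omega
  have hi := fun R : Set (ℤ × ℤ) => hf.indicator R
  have htot : ∑' q, f q - ∑' a, f (a, -a) = ∑' q, QQ.indicator f q + ∑' q, R2.indicator f q
      + ∑' q, R3.indicator f q + ∑' q, R4.indicator f q + ∑' q, R5.indicator f q
      + ∑' q, R6.indicator f q := by
    rw [tsum_congr hpt, Summable.tsum_add _ (hi _), Summable.tsum_add _ (hi _),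
      Summable.tsum_add _ (hi _), Summable.tsum_add _ (hi _), Summable.tsum_add _ (hi _),
      Summable.tsum_add (hi _) (hi _), hk0]
    · ring
    · exact ((hi _).add (hi _))
    · exact ((hi _).add (hi _)).add (hi _)
    · exact (((hi _).add (hi _)).add (hi _)).add (hi _)
    · exact ((((hi _).add (hi _)).add (hi _)).add (hi _)).add (hi _)
    · exact (((((hi _).add (hi _)).add (hi _)).add (hi _)).add (hi _)).add (hi _)
  rw [htot]
  convert ((((k1.add k2).add k3).add k4).add k5).add k6 using 1
  funext q
  by_cases h : q ∈ QQ
  · simp [h, eq2, eq3, eq4, eq5, eq6]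
  · simp [h]

/-- Limit along squares. -/
theorem tsum_le_of_squares (g : ℤ × ℤ → ℝ) (hg : Summable g) (B : ℝ)
    (h : ∀ F : Finset ℤ, |∑ a ∈ F, ∑ c ∈ F, g (a, c)| ≤ B) : |∑' q, g q| ≤ B := by
  have h1 : Tendsto (fun F : Finset ℤ => ∑ q ∈ F ×ˢ F, g q) atTop (𝓝 (∑' q, g q)) :=
    (hg.hasSum : Tendsto _ _ _).comp
      ((tendsto_finsetProd_atTop).comp tendsto_atTop_diagonal)
  refine le_of_tendsto h1.abs (Eventually.of_forall fun F => ?_)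
  rw [Finset.sum_product]
  exact h F

end RegionSplit

section Nonlinear
open MeasureTheory Set Filter Topology

/-- The complex trilinear summand. -/
def cF (s ε : ℝ) (θ : FC) (q : ℤ × ℤ) : ℂ :=
  ((mm s ε (q.1 + q.2) ^ 2 * ((Int.sign q.1 : ℝ) * (q.2 : ℝ)) : ℝ) : ℂ)
    * (θ q.1 * θ q.2 * (starRingEnd ℂ) (θ (q.1 + q.2)))

/-- The real trilinear form. -/
def tau (θ : FC) (a b : ℤ) : ℝ := (θ a * θ b * (starRingEnd ℂ) (θ (a + b))).re

theorem cF_re (s ε : ℝ) (θ : FC) (q : ℤ × ℤ) :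
    (cF s ε θ q).re = mm s ε (q.1 + q.2) ^ 2 * ((Int.sign q.1 : ℝ) * (q.2 : ℝ)) * tau θ q.1 q.2 := by
  unfold cF tau; rw [Complex.re_ofReal_mul]

theorem sign_abs_le (a : ℤ) : |(Int.sign a : ℝ)| ≤ 1 := by
  rcases lt_trichotomy a 0 with h | h | h
  · simp [Int.sign_eq_neg_one_of_neg h]
  · simp [h]
  · simp [Int.sign_eq_one_of_pos h]

theorem cF_bound (s : ℝ) (hs : 2 ≤ s) {ε : ℝ} (hε : ε ∈ Ioo (0 : ℝ) 1) (θ : FC) (q : ℤ × ℤ) :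
    ‖cF s ε θ q‖ ≤ ((ε ^ 2)⁻¹ * 2 ^ (s / 2 - 1)) *
      (zz q.1 ^ (s / 2 - 1) * ‖θ q.1‖ * (ww s θ q.2 * ww s θ (q.2 + q.1))) := by
  obtain ⟨a, b⟩ := q
  unfold cF ww
  simp only []
  rw [norm_mul, norm_mul, norm_mul, RCLike.norm_conj, Complex.norm_real, Real.norm_eq_abs,
    abs_mul, abs_mul, abs_of_nonneg (sq_nonneg _), add_comm b a]
  set k := a + b with hk
  have h1 := mm_sq_le s hε k
  have h2 := sign_abs_le a
  have h3 := abs_le_zz_half b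
  have h4 : zz k ^ (s / 2 - 1) ≤ 2 ^ (s / 2 - 1) * (zz a ^ (s / 2 - 1) * zz b ^ (s / 2 - 1)) := by
    rw [← Real.mul_rpow (zz_pos _).le (zz_pos _).le,
      ← Real.mul_rpow (by norm_num) (mul_pos (zz_pos _) (zz_pos _)).le]
    refine Real.rpow_le_rpow (zz_pos _).le ?_ (by linarith)
    have := zz_peetre a b
    rw [hk]; linarith
  have h5 : zz b ^ (s / 2 - 1) * zz b ^ ((1 : ℝ) / 2) ≤ zz b ^ (s / 2) := by
    rw [← Real.rpow_add (zz_pos _)]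
    exact Real.rpow_le_rpow_of_exponent_le (one_le_zz b) (by linarith)
  have hε0 : 0 < ε ^ 2 := by have := hε.1; positivity
  have hi : 0 ≤ (ε ^ 2)⁻¹ := by positivity
  have p1 := Real.rpow_nonneg (zz_pos k).le (s / 2)
  have p2 := Real.rpow_nonneg (zz_pos a).le (s / 2 - 1)
  have p3 := Real.rpow_nonneg (zz_pos b).le (s / 2 - 1)
  have p4 := Real.rpow_nonneg (zz_pos b).le (s / 2)
  have p5 := Real.rpow_nonneg (zz_pos b).le (1 / 2)
  have p6 : (0 : ℝ) ≤ 2 ^ (s / 2 - 1) := by positivity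
  calc mm s ε k ^ 2 * (|(Int.sign a : ℝ)| * |(b : ℝ)|) * (‖θ a‖ * ‖θ b‖ * ‖θ k‖)
      ≤ ((ε ^ 2)⁻¹ * (zz k ^ (s / 2) * (2 ^ (s / 2 - 1) *
          (zz a ^ (s / 2 - 1) * zz b ^ (s / 2 - 1))))) * (1 * zz b ^ ((1 : ℝ) / 2))
          * (‖θ a‖ * ‖θ b‖ * ‖θ k‖) := by
        refine mul_le_mul_of_nonneg_right ?_ (by positivity)
        refine mul_le_mul ?_ ?_ (by positivity) (by positivity)
        · exact h1.trans (by gcongr)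
        · gcongr
    _ = ((ε ^ 2)⁻¹ * 2 ^ (s / 2 - 1)) * (zz k ^ (s / 2) * zz a ^ (s / 2 - 1)
          * (‖θ a‖ * ‖θ b‖ * ‖θ k‖)) * (zz b ^ (s / 2 - 1) * zz b ^ ((1 : ℝ) / 2)) := by ring
    _ ≤ ((ε ^ 2)⁻¹ * 2 ^ (s / 2 - 1)) * (zz k ^ (s / 2) * zz a ^ (s / 2 - 1)
          * (‖θ a‖ * ‖θ b‖ * ‖θ k‖)) * zz b ^ (s / 2) := by
        gcongr
    _ = _ := by ring

theorem cF_summable (s : ℝ) (hs : 2 ≤ s) {ε : ℝ} (hε : ε ∈ Ioo (0 : ℝ) 1) (θ : FC)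
    (hθ : FC.memHs s θ) : Summable (cF s ε θ) := by
  refine Summable.of_norm_bounded ?_ (cF_bound s hs hε θ)
  refine Summable.mul_left _ ?_
  exact (conv_sum (fun a : ℤ => zz a ^ (s / 2 - 1) * ‖θ a‖) (l1_summable hθ le_rfl)
    (fun a => mul_nonneg (Real.rpow_nonneg (zz_pos a).le _) (norm_nonneg _)) (fun a => a)
    (ww s θ) (ww s θ) (ww_summable hθ) (ww_summable hθ) (ww_nonneg s θ) (ww_nonneg s θ)).1

def eqkj : ℤ × ℤ ≃ ℤ × ℤ where
  toFun := fun q => (q.2, q.1 - q.2)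
  invFun := fun q => (q.1 + q.2, q.1)
  left_inv := fun q => by simp
  right_inv := fun q => by simp

theorem nonlin_tsum (s : ℝ) (hs : 2 ≤ s) {ε : ℝ} (hε : ε ∈ Ioo (0 : ℝ) 1) (θ : FC)
    (hθ : FC.memHs s θ) :
    HasSum (fun k : ℤ => ((mm s ε k ^ 2 : ℝ) : ℂ) *
      (FC.mul (FC.hilbert θ) (FC.D1 θ) k * (starRingEnd ℂ) (θ k))) (∑' q, cF s ε θ q) := by
  have h1 := cF_summable s hs hε θ hθ
  have h2 : Summable fun q => cF s ε θ (eqkj q) := (eqkj.summable_iff).2 h1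
  have h3 : ∀ k : ℤ, ∑' j : ℤ, cF s ε θ (eqkj (k, j)) = ((mm s ε k ^ 2 : ℝ) : ℂ) *
      (FC.mul (FC.hilbert θ) (FC.D1 θ) k * (starRingEnd ℂ) (θ k)) := by
    intro k
    unfold FC.mul
    rw [← tsum_mul_right, ← tsum_mul_left]
    refine tsum_congr fun j => ?_
    simp only [cF, eqkj, FC.hilbert, FC.D1, Equiv.coe_fn_mk, add_sub_cancel]
    push_cast
    linear_combination (-(mm s ε k : ℂ) ^ 2 * (Int.sign j : ℂ) * ((k : ℂ) - j) * θ j * θ (k - j) *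
      (starRingEnd ℂ) (θ k)) * (-1 - Complex.I_mul_I)
  have h4 := h2.hasSum.prod_fiberwise (fun k => (h2.prod_factor k).hasSum)
  rw [eqkj.tsum_eq] at h4
  simpa only [h3] using h4

theorem tau_comm (θ : FC) (a b : ℤ) : tau θ a b = tau θ b a := by
  unfold tau; rw [add_comm b a, mul_comm (θ a)]

theorem tau_neg {θ : FC} (h : FC.isReal θ) (a b : ℤ) : tau θ (-a) (-b) = tau θ a b := by
  unfold tau
  rw [show -a + -b = -(a + b) by ring, h, h, h, ← map_mul, ← map_mul, Complex.conj_re]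

theorem tau_3 {θ : FC} (h : FC.isReal θ) (a b : ℤ) : tau θ (a + b) (-b) = tau θ a b := by
  unfold tau
  rw [show a + b + -b = a by ring, h, ← Complex.conj_re]
  simp only [map_mul, Complex.conj_conj]
  ring_nf

theorem six_sum {s ε : ℝ} {θ : FC} (h : FC.isReal θ) (a b : ℤ) (ha : 0 < a) (hb : 0 < b) :
    (cF s ε θ (a, b)).re + (cF s ε θ (-a, -b)).re + (cF s ε θ (a + b, -b)).re
      + (cF s ε θ (b, -a - b)).re + (cF s ε θ (-b, a + b)).re + (cF s ε θ (-a - b, b)).re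
    = 2 * (mm s ε (a + b) ^ 2 * b * tau θ a b)
      - 2 * (mm s ε a ^ 2 * ((a : ℝ) + 2 * b) * tau θ a b) := by
  have hc : 0 < a + b := by omega
  simp only [cF_re]
  have e1 : tau θ (-a) (-b) = tau θ a b := tau_neg h a b
  have e3 : tau θ (a + b) (-b) = tau θ a b := tau_3 h a b
  have e4 : tau θ b (-a - b) = tau θ a b := by
    rw [← tau_neg h, show -(-a - b) = a + b by ring, tau_comm, tau_3 h]
  have e5 : tau θ (-b) (a + b) = tau θ a b := by rw [tau_comm, tau_3 h]
  have e6 : tau θ (-a - b) b = tau θ a b := by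
    rw [← tau_neg h, show -(-a - b) = a + b by ring, tau_3 h]
  rw [e1, e3, e4, e5, e6, show -a + -b = -(a + b) by ring, show a + b + -b = a by ring,
    show b + (-a - b) = -a by ring, show -b + (a + b) = a by ring, show -a - b + b = -a by ring,
    show -a - b = -(a + b) by ring]
  simp only [mm_neg, Int.sign_neg, Int.sign_eq_one_of_pos ha, Int.sign_eq_one_of_pos hb,
    Int.sign_eq_one_of_pos hc]
  push_cast
  ring

end Nonlinear

section Nonlinear2
open MeasureTheory Set Filter Topology

theorem poly_bdd (P : Polynomial ℝ) : ∃ K : ℝ, 0 ≤ K ∧ ∀ x ∈ Icc (0 : ℝ) 1, |P.eval x| ≤ K := by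
  obtain ⟨K, hK⟩ := (isCompact_Icc (a := (0 : ℝ)) (b := 1)).exists_bound_of_continuousOn
    (f := fun x => P.eval x) P.continuous.continuousOn
  refine ⟨K, (norm_nonneg _).trans (hK 0 (by simp)), fun x hx => ?_⟩
  simpa using hK x hx

/-- Symmetrization with the polynomial partition. -/
theorem sym_poly (P : Polynomial ℝ) (hP : ∀ x, P.eval x + P.eval (1 - x) = 1)
    (y : ℤ → ℝ) (t : ℤ → ℤ → ℝ) (ht : ∀ a b, t a b = t b a)
    (hs : Summable (QQ.indicator fun q => y (q.1 + q.2) * (q.2 : ℝ) * t q.1 q.2)) :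
    Summable (QQ.indicator fun q => P.eval ((q.1 : ℝ) / ((q.1 + q.2 : ℤ) : ℝ))
      * (((q.1 + q.2 : ℤ) : ℝ) * y (q.1 + q.2)) * t q.1 q.2) ∧
    ∑' q, QQ.indicator (fun q => P.eval ((q.1 : ℝ) / ((q.1 + q.2 : ℤ) : ℝ))
      * (((q.1 + q.2 : ℤ) : ℝ) * y (q.1 + q.2)) * t q.1 q.2) q
    = ∑' q, QQ.indicator (fun q => y (q.1 + q.2) * (q.2 : ℝ) * t q.1 q.2) q := by
  set h := QQ.indicator fun q : ℤ × ℤ => y (q.1 + q.2) * (q.2 : ℝ) * t q.1 q.2 with hh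
  set g := QQ.indicator fun q : ℤ × ℤ => ((q.1 + q.2 : ℤ) : ℝ) * y (q.1 + q.2) * t q.1 q.2 with hg
  set Pg := QQ.indicator (fun q : ℤ × ℤ => P.eval ((q.1 : ℝ) / ((q.1 + q.2 : ℤ) : ℝ))
      * (((q.1 + q.2 : ℤ) : ℝ) * y (q.1 + q.2)) * t q.1 q.2) with hPg
  have s2 : Summable fun q => h (Equiv.prodComm ℤ ℤ q) :=
    ((Equiv.prodComm ℤ ℤ).summable_iff (f := h)).2 hs
  have t2 : ∑' q, h (Equiv.prodComm ℤ ℤ q) = ∑' q, h q :=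
    (Equiv.prodComm ℤ ℤ).tsum_eq h
  have e1 : ∀ q, g q = h q + h (Equiv.prodComm ℤ ℤ q) := by
    rintro ⟨a, b⟩
    by_cases hq : 0 < a ∧ 0 < b
    · have m1 : (a, b) ∈ QQ := hq
      have m2 : (b, a) ∈ QQ := hq.symm
      simp only [hg, hh, Equiv.prodComm_apply, Prod.swap_prod_mk, Set.indicator_of_mem m1,
        Set.indicator_of_mem m2]
      rw [add_comm b a, ht b a]
      push_cast; ring
    · have m1 : (a, b) ∉ QQ := hq
      have m2 : (b, a) ∉ QQ := fun h' => hq ⟨h'.2, h'.1⟩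
      simp [hg, hh, m1, m2]
  have sg : Summable g := (hs.add s2).congr fun q => (e1 q).symm
  have tg : ∑' q, g q = 2 * ∑' q, h q := by
    rw [tsum_congr e1, hs.tsum_add s2, t2]; ring
  obtain ⟨K, hK, hKb⟩ := poly_bdd P
  have sPg : Summable Pg := by
    refine Summable.of_norm_bounded (g := fun q => K * |g q|) (sg.abs.mul_left K) ?_
    rintro ⟨a, b⟩
    by_cases hq : 0 < a ∧ 0 < b
    · have m1 : (a, b) ∈ QQ := hq
      simp only [hg, hPg, Set.indicator_of_mem m1]
      rw [mul_assoc, norm_mul, Real.norm_eq_abs, Real.norm_eq_abs]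
      refine mul_le_mul_of_nonneg_right (hKb _ ?_) (abs_nonneg _)
      have p1 : (0 : ℝ) < a := by exact_mod_cast hq.1
      have p2 : (0 : ℝ) < b := by exact_mod_cast hq.2
      push_cast
      refine ⟨by positivity, ?_⟩
      rw [div_le_one (by positivity)]; linarith
    · have m1 : (a, b) ∉ QQ := hq
      simp [hg, hPg, m1]
  have s3 : Summable fun q => Pg (Equiv.prodComm ℤ ℤ q) :=
    ((Equiv.prodComm ℤ ℤ).summable_iff (f := Pg)).2 sPg
  have t3 : ∑' q, Pg (Equiv.prodComm ℤ ℤ q) = ∑' q, Pg q :=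
    (Equiv.prodComm ℤ ℤ).tsum_eq Pg
  have e2 : ∀ q, g q = Pg q + Pg (Equiv.prodComm ℤ ℤ q) := by
    rintro ⟨a, b⟩
    by_cases hq : 0 < a ∧ 0 < b
    · have m1 : (a, b) ∈ QQ := hq
      have m2 : (b, a) ∈ QQ := hq.symm
      simp only [hg, hPg, Equiv.prodComm_apply, Prod.swap_prod_mk, Set.indicator_of_mem m1,
        Set.indicator_of_mem m2]
      rw [add_comm b a, ht b a]
      have p1 : (0 : ℝ) < a := by exact_mod_cast hq.1
      have p2 : (0 : ℝ) < b := by exact_mod_cast hq.2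
      have e3 : (b : ℝ) / ((a + b : ℤ) : ℝ) = 1 - (a : ℝ) / ((a + b : ℤ) : ℝ) := by
        push_cast; field_simp; ring
      have := hP ((a : ℝ) / ((a + b : ℤ) : ℝ))
      rw [e3]
      linear_combination (-(((a + b : ℤ) : ℝ) * y (a + b) * t a b)) * this
    · have m1 : (a, b) ∉ QQ := hq
      have m2 : (b, a) ∉ QQ := fun h' => hq ⟨h'.2, h'.1⟩
      simp [hg, hPg, m1, m2]
  have tg2 : ∑' q, g q = 2 * ∑' q, Pg q := by
    rw [tsum_congr e2, sPg.tsum_add s3, t3]; ring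
  exact ⟨sPg, by linarith⟩

/-- The function with coefficients `b θ_b for positive b`. -/
def GG (θ : FC) : FC := fun b => if 0 < b then (b : ℂ) * θ b else 0

theorem D1_summable {s : ℝ} (hs : 3 ≤ s) {θ : FC} (hθ : FC.memHs s θ) :
    Summable fun k => ‖FC.D1 θ k‖ := by
  refine Summable.of_nonneg_of_le (fun k => norm_nonneg _) (fun k => ?_)
    (l1_summable (t := 1 / 2) hθ (by linarith))
  unfold FC.D1
  rw [norm_mul, norm_mul, Complex.norm_I, one_mul, Complex.norm_intCast]
  have := abs_le_zz_half k
  gcongr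

theorem hilbert_norm_le (c : FC) (k : ℤ) : ‖FC.hilbert c k‖ ≤ ‖c k‖ := by
  unfold FC.hilbert
  rw [norm_mul, norm_mul, norm_neg, Complex.norm_I, one_mul]
  have h : ‖((Int.sign k : ℤ) : ℂ)‖ ≤ 1 := by
    rw [Complex.norm_intCast]; exact sign_abs_le k
  nlinarith [norm_nonneg (c k)]

theorem eval_summable {c : FC} (h : Summable fun k => ‖c k‖) (x : ℝ) :
    Summable fun k : ℤ => c k * Complex.exp (Complex.I * (k : ℂ) * (x : ℂ)) := by
  refine Summable.of_norm (h.congr fun k => ?_)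
  have := ex_norm k x
  unfold ex at this
  rw [norm_mul, this, mul_one]

theorem eval_le_linfty {c : FC} (h : Summable fun k => ‖c k‖) (x : ℝ) :
    ‖FC.eval c x‖ ≤ FC.linfty c := by
  unfold FC.linfty
  refine le_ciSup (f := fun x => ‖FC.eval c x‖) ⟨∑' k, ‖c k‖, ?_⟩ x
  rintro _ ⟨y, rfl⟩
  unfold FC.eval
  refine (norm_tsum_le_tsum_norm (eval_summable h y).norm).trans (le_of_eq ?_)
  refine tsum_congr fun k => ?_
  have := ex_norm k y
  unfold ex at this
  rw [norm_mul, this, mul_one]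

/-- Half the sum of the two sup norms. -/
def AA (θ : FC) : ℝ := (FC.linfty (FC.D1 θ) + FC.linfty (FC.hilbert (FC.D1 θ))) / 2

theorem GG_eq (θ : FC) (k : ℤ) :
    GG θ k = (1 / 2 : ℂ) * FC.hilbert (FC.D1 θ) k - (Complex.I / 2) * FC.D1 θ k := by
  unfold GG FC.hilbert FC.D1
  have hI := Complex.I_mul_I
  rcases lt_trichotomy k 0 with h | h | h
  · rw [if_neg (by omega), Int.sign_eq_neg_one_of_neg h]; push_cast
    ring
  · rw [if_neg (by omega), h]; simp
  · rw [if_pos h, Int.sign_eq_one_of_pos h]; push_cast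
    linear_combination ((k : ℂ) * θ k) * hI

theorem GG_summable {s : ℝ} (hs : 3 ≤ s) {θ : FC} (hθ : FC.memHs s θ) :
    Summable fun k => ‖GG θ k‖ := by
  refine Summable.of_nonneg_of_le (fun k => norm_nonneg _) (fun k => ?_) (D1_summable hs hθ)
  unfold GG FC.D1
  split_ifs
  · simp
  · simp [mul_nonneg]

theorem GG_eval {s : ℝ} (hs : 3 ≤ s) {θ : FC} (hθ : FC.memHs s θ) (x : ℝ) :
    ‖FC.eval (GG θ) x‖ ≤ AA θ := by
  have h1 := D1_summable hs hθ
  have h2 : Summable fun k => ‖FC.hilbert (FC.D1 θ) k‖ :=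
    Summable.of_nonneg_of_le (fun k => norm_nonneg _) (fun k => hilbert_norm_le _ k) h1
  have e : FC.eval (GG θ) x
      = (1 / 2 : ℂ) * FC.eval (FC.hilbert (FC.D1 θ)) x - (Complex.I / 2) * FC.eval (FC.D1 θ) x := by
    unfold FC.eval
    rw [← tsum_mul_left, ← tsum_mul_left, ← Summable.tsum_sub]
    · refine tsum_congr fun k => ?_
      rw [GG_eq]; ring
    · exact (eval_summable h2 x).mul_left _
    · exact (eval_summable h1 x).mul_left _
  rw [e]
  have l1 := eval_le_linfty h1 x
  have l2 := eval_le_linfty h2 x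
  refine (norm_sub_le _ _).trans ?_
  rw [norm_mul, norm_mul]
  have n1 : ‖(1 / 2 : ℂ)‖ = 1 / 2 := by norm_num
  have n2 : ‖(Complex.I / 2 : ℂ)‖ = 1 / 2 := by simp
  rw [n1, n2]
  unfold AA
  linarith

theorem AA_nonneg {s : ℝ} (hs : 3 ≤ s) {θ : FC} (hθ : FC.memHs s θ) : 0 ≤ AA θ :=
  (norm_nonneg _).trans (GG_eval hs hθ 0)

theorem pt_bound {s : ℝ} (hs : 3 ≤ s) {θ : FC} (hθ : FC.memHs s θ) (hr : FC.isReal θ) (a : ℤ) :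
    |(a : ℝ)| * ‖θ a‖ ≤ AA θ := by
  have key : ∀ b : ℤ, 0 < b → |(b : ℝ)| * ‖θ b‖ ≤ AA θ := by
    intro b hb
    have h := toeplitz (GG θ) (GG_summable hs hθ) (AA θ) (GG_eval hs hθ) {0, b}
      (fun a => if a = 0 then 1 else 0) (fun a => if a = b then 1 else 0)
    have hb0 : (0 : ℤ) ≠ b := hb.ne
    rw [Finset.sum_pair hb0, Finset.sum_pair hb0, Finset.sum_pair hb0, Finset.sum_pair hb0,
      Finset.sum_pair hb0] at h
    simp [hb0, hb0.symm, GG, hb] at h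
    linarith
  rcases lt_trichotomy a 0 with h | h | h
  · have := key (-a) (by omega)
    rw [hr, RCLike.norm_conj] at this
    simpa using this
  · rw [h]; simpa using AA_nonneg hs hθ
  · exact key a h

/-- The zero-frequency part. -/
theorem zero_part {s : ℝ} (hs : 3 ≤ s) (ε : ℝ) {θ : FC} (hθ : FC.memHs s θ)
    (hr : FC.isReal θ) :
    |∑' a : ℤ, (cF s ε θ (a, -a)).re|
      ≤ (∑' a : ℤ, (zz a)⁻¹ ^ 2 + 1) * AA θ * FC.hsNorm s θ ^ 2 := by
  have hA := AA_nonneg hs hθ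
  set H := FC.hsNorm s θ with hH
  have hz := summable_zinv_sq
  have hw := ww_summable hθ
  have hS : Summable fun a : ℤ => AA θ * ((zz a)⁻¹ ^ 2 * H ^ 2 + ww s θ a ^ 2) :=
    ((hz.mul_right _).add hw).mul_left _
  have hb : ∀ a : ℤ, ‖(cF s ε θ (a, -a)).re‖ ≤ AA θ * ((zz a)⁻¹ ^ 2 * H ^ 2 + ww s θ a ^ 2) := by
    intro a
    rw [Real.norm_eq_abs]
    refine (Complex.abs_re_le_norm _).trans ?_
    unfold cF
    simp only [add_neg_cancel]
    rw [norm_mul, norm_mul, norm_mul, RCLike.norm_conj, Complex.norm_real, Real.norm_eq_abs,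
      abs_mul, abs_mul, hr, RCLike.norm_conj]
    have m0 : |mm s ε 0 ^ 2| = 1 := by simp [mm, zz, ee]
    rw [m0, one_mul]
    push_cast
    rw [abs_neg]
    have h1 := pt_bound hs hθ hr a
    have h2 := sign_abs_le a
    have h3 : ‖θ 0‖ ≤ H := by
      have := ww_le hθ 0
      simpa [ww, zz] using this
    have h4 : ‖θ a‖ ≤ (zz a)⁻¹ * ww s θ a := by
      unfold ww
      rw [← mul_assoc]
      refine le_mul_of_one_le_left (norm_nonneg _) ?_
      rw [← Real.rpow_neg_one, ← Real.rpow_add (zz_pos a)]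
      exact Real.one_le_rpow (one_le_zz a) (by linarith)
    have p1 := (inv_pos.2 (zz_pos a)).le
    have p2 := ww_nonneg s θ a
    have p3 : 0 ≤ H := Real.sqrt_nonneg _
    calc |(Int.sign a : ℝ)| * |(a : ℝ)| * (‖θ a‖ * ‖θ a‖ * ‖θ 0‖)
        = |(Int.sign a : ℝ)| * (|(a : ℝ)| * ‖θ a‖) * (‖θ a‖ * ‖θ 0‖) := by ring
      _ ≤ 1 * AA θ * (((zz a)⁻¹ * ww s θ a) * H) := by gcongr
      _ ≤ _ := by
        rw [one_mul]
        refine mul_le_mul_of_nonneg_left ?_ hA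
        nlinarith [sq_nonneg ((zz a)⁻¹ * H - ww s θ a), sq_nonneg ((zz a)⁻¹ * H),
          sq_nonneg (ww s θ a)]
  have := tsum_of_norm_bounded hS.hasSum hb
  rw [Real.norm_eq_abs] at this
  refine this.trans (le_of_eq ?_)
  rw [tsum_mul_left, Summable.tsum_add (hz.mul_right _) hw, tsum_mul_right, ← hsNorm_sq]
  ring

end Nonlinear2

section Nonlinear3
open MeasureTheory Set Filter Topology

/-- The Hankel-type matrix of `∂ₓθ`. -/
def MM (θ : FC) (a c : ℤ) : ℂ := if 0 < a ∧ a < c then GG θ (c - a) else 0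

theorem MM_bdd {s : ℝ} (hs : 3 ≤ s) {θ : FC} (hθ : FC.memHs s θ) : MBdd (MM θ) (AA θ) := by
  intro F u v
  have hA := AA_nonneg hs hθ
  have h := toeplitz (GG θ) (GG_summable hs hθ) (AA θ) (GG_eval hs hθ) F
    (fun a => if 0 < a then u a else 0) v
  have e : ∑ a ∈ F, ∑ c ∈ F, MM θ a c * (u a * v c)
      = ∑ a ∈ F, ∑ c ∈ F, GG θ (c - a) * ((if 0 < a then u a else 0) * v c) := by
    refine Finset.sum_congr rfl fun a _ => Finset.sum_congr rfl fun c _ => ?_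
    unfold MM GG
    by_cases h1 : 0 < a <;> by_cases h2 : a < c
    · simp [h1, h2]
    · simp [h1, h2]
    · simp [h1]
    · simp [h1]
  rw [e]
  refine h.trans ?_
  have : ∑ a ∈ F, ‖(if 0 < a then u a else 0)‖ ^ 2 ≤ ∑ a ∈ F, ‖u a‖ ^ 2 := by
    refine Finset.sum_le_sum fun a _ => ?_
    split_ifs
    · exact le_rfl
    · simp
  gcongr

theorem mm_ww_le (s ε : ℝ) (θ : FC) (k : ℤ) : mm s ε k * ‖θ k‖ ≤ ww s θ k := by
  unfold ww
  have := mm_le s ε k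
  gcongr

theorem mm_sum_le {s : ℝ} (ε : ℝ) {θ : FC} (hθ : FC.memHs s θ) (F : Finset ℤ) (u : ℤ → ℂ)
    (hu : ∀ k, ‖u k‖ = mm s ε k * ‖θ k‖) : ∑ a ∈ F, ‖u a‖ ^ 2 ≤ FC.hsNorm s θ ^ 2 := by
  rw [hsNorm_sq]
  refine le_trans ?_ ((ww_summable hθ).sum_le_tsum F fun _ _ => sq_nonneg _)
  refine Finset.sum_le_sum fun a _ => ?_
  rw [hu]
  exact pow_le_pow_left₀ (mul_nonneg (mm_pos s ε a).le (norm_nonneg _)) (mm_ww_le s ε θ a) 2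

theorem nonlin_bound (s : ℝ) (hs : 3 ≤ s) : ∃ C : ℝ, 0 ≤ C ∧ ∀ ε ∈ Ioo (0 : ℝ) 1, ∀ θ : FC,
    FC.memHs s θ → FC.isReal θ →
    |(∑' q, cF s ε θ q).re| ≤ C * AA θ * FC.hsNorm s θ ^ 2 := by
  obtain ⟨P, hP, C1, hC1, hSM⟩ := main_symbol s (by linarith)
  have hZ : 0 ≤ ∑' a : ℤ, (zz a)⁻¹ ^ 2 := tsum_nonneg fun a => by positivity
  refine ⟨(∑' a : ℤ, (zz a)⁻¹ ^ 2 + 1) + 2 * C1, by positivity, fun ε hε θ hθ hr => ?_⟩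
  have hc := cF_summable s (by linarith) hε θ hθ
  have hA := AA_nonneg hs hθ
  rw [Complex.re_tsum hc]
  set f : ℤ × ℤ → ℝ := fun q => (cF s ε θ q).re with hf
  have sf : Summable f := (Complex.hasSum_re hc.hasSum).summable
  have hsp := region_split f sf (fun a => by simp [hf, cF]) (fun a => by simp [hf, cF])
  have h0 := zero_part hs ε hθ hr
  -- the quadrant part
  set h : ℤ × ℤ → ℝ := QQ.indicator fun q => mm s ε (q.1 + q.2) ^ 2 * (q.2 : ℝ) * tau θ q.1 q.2
    with hh
  set w : ℤ × ℤ → ℝ := QQ.indicator fun q =>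
    mm s ε q.1 ^ 2 * ((q.1 : ℝ) + 2 * (q.2 : ℝ)) * tau θ q.1 q.2 with hw
  have sh : Summable h := by
    refine (sf.indicator QQ).congr fun q => ?_
    by_cases hq : q ∈ QQ
    · simp only [hh, Set.indicator_of_mem hq, hf, cF_re, Int.sign_eq_one_of_pos hq.1]
      push_cast; ring
    · simp [hh, hq]
  have e1 : ∀ q, QQ.indicator (fun q => f q + f (-q.1, -q.2) + f (q.1 + q.2, -q.2)
      + f (q.2, -q.1 - q.2) + f (-q.2, q.1 + q.2) + f (-q.1 - q.2, q.2)) q = 2 * h q - 2 * w q := by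
    intro q
    by_cases hq : q ∈ QQ
    · simp only [hh, hw, Set.indicator_of_mem hq, hf]
      exact six_sum hr q.1 q.2 hq.1 hq.2
    · simp [hh, hw, hq]
  rw [show QQ.indicator (fun q => f q + f (-q.1, -q.2) + f (q.1 + q.2, -q.2)
      + f (q.2, -q.1 - q.2) + f (-q.2, q.1 + q.2) + f (-q.1 - q.2, q.2))
      = fun q => 2 * h q - 2 * w q from funext e1] at hsp
  have sw : Summable w := by
    have := ((sh.mul_left 2).sub hsp.summable).mul_left (1 / 2)
    refine this.congr fun q => ?_
    ring
  obtain ⟨sP, tP⟩ := sym_poly P hP (fun k => mm s ε k ^ 2) (tau θ) (tau_comm θ) sh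
  set Pg : ℤ × ℤ → ℝ := QQ.indicator (fun q => P.eval ((q.1 : ℝ) / ((q.1 + q.2 : ℤ) : ℝ))
      * (((q.1 + q.2 : ℤ) : ℝ) * mm s ε (q.1 + q.2) ^ 2) * tau θ q.1 q.2) with hPg
  have e2 : ∑' q, f q - ∑' a, f (a, -a) = 2 * ∑' q, (Pg q - w q) := by
    rw [← hsp.tsum_eq, (sh.mul_left 2).tsum_sub (sw.mul_left 2), tsum_mul_left, tsum_mul_left,
      sP.tsum_sub sw, tP]
    ring
  have key : |∑' q, (Pg q - w q)| ≤ C1 * AA θ * FC.hsNorm s θ ^ 2 := by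
    have sg : Summable fun q => Pg q - w q := sP.sub sw
    rw [← (shear (fun a : ℤ => -a)).tsum_eq]
    refine tsum_le_of_squares _
      (((shear (fun a : ℤ => -a)).summable_iff (f := fun q => Pg q - w q)).2 sg) _ fun F => ?_
    have hM := hSM ε hε (MM θ) (AA θ) hA (fun a c hac => by simp [MM, hac]) (MM_bdd hs hθ) F
      (fun a => (mm s ε a : ℂ) * θ a) (fun c => (mm s ε c : ℂ) * (starRingEnd ℂ) (θ c))
    have n1 := mm_sum_le ε hθ F (fun a => (mm s ε a : ℂ) * θ a) (fun k => by
      rw [norm_mul, Complex.norm_real, Real.norm_eq_abs, abs_of_pos (mm_pos s ε k)])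
    have n2 := mm_sum_le ε hθ F (fun a => (mm s ε a : ℂ) * (starRingEnd ℂ) (θ a)) (fun k => by
      rw [norm_mul, Complex.norm_real, Real.norm_eq_abs, abs_of_pos (mm_pos s ε k),
        RCLike.norm_conj])
    have hle : C1 * AA θ / 2 * (∑ a ∈ F, ‖(mm s ε a : ℂ) * θ a‖ ^ 2
        + ∑ c ∈ F, ‖(mm s ε c : ℂ) * (starRingEnd ℂ) (θ c)‖ ^ 2)
        ≤ C1 * AA θ * FC.hsNorm s θ ^ 2 := by
      have : 0 ≤ C1 * AA θ := by positivity
      nlinarith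
    refine le_trans ?_ (hM.trans hle)
    refine le_trans (le_of_eq ?_) (Complex.abs_re_le_norm _)
    congr 1
    rw [Complex.re_sum]
    refine Finset.sum_congr rfl fun a _ => ?_
    rw [Complex.re_sum]
    refine Finset.sum_congr rfl fun c _ => ?_
    simp only [shear, Equiv.coe_fn_mk, Function.comp_apply]
    by_cases hac : 0 < a ∧ a < c
    · have hq : (a, c + -a) ∈ QQ := ⟨hac.1, by simp; omega⟩
      have hb : 0 < c - a := by omega
      simp only [hPg, hw, Set.indicator_of_mem hq, MM, if_pos hac, GG, if_pos hb]
      rw [show a + (c + -a) = c by ring]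
      unfold tau
      rw [show a + (c + -a) = c by ring, show c + -a = c - a by ring]
      have p1 : (0 : ℝ) < a := by exact_mod_cast hac.1
      have p2 : (0 : ℝ) < (c : ℝ) - a := by
        have : (a : ℝ) < c := by exact_mod_cast hac.2
        linarith
      have m1 := mm_pos s ε a
      have m2 := mm_pos s ε c
      set t := θ a * θ (c - a) * (starRingEnd ℂ) (θ c) with ht
      set Y := P.eval ((a : ℝ) / c) * (c * mm s ε c ^ 2) - ((a : ℝ) + 2 * (c - a)) * mm s ε a ^ 2
        with hY
      have e3 : (((Y / (((c : ℝ) - a) * mm s ε a * mm s ε c) : ℝ)) : ℂ)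
          * ((((c - a : ℤ)) : ℂ) * θ (c - a))
          * ((mm s ε a : ℂ) * θ a * ((mm s ε c : ℂ) * (starRingEnd ℂ) (θ c)))
          = ((Y / (((c : ℝ) - a) * mm s ε a * mm s ε c) * (((c : ℝ) - a) * mm s ε a * mm s ε c)
            : ℝ) : ℂ) * t := by
        rw [ht]; push_cast; ring
      rw [e3, Complex.re_ofReal_mul, div_mul_cancel₀ _ (by positivity), hY]
      push_cast
      ring
    · have hq : (a, c + -a) ∉ QQ := fun h' => hac ⟨h'.1, by have := h'.2; simp at this; omega⟩
      simp [hPg, hw, hq, MM, hac]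
  have e4 : ∑' q, f q = ∑' a, f (a, -a) + 2 * ∑' q, (Pg q - w q) := by linarith
  rw [e4]
  refine (abs_add_le _ _).trans ?_
  rw [abs_mul, abs_of_pos (by norm_num : (0 : ℝ) < 2)]
  have h0' : |∑' a, f (a, -a)| ≤ (∑' a : ℤ, (zz a)⁻¹ ^ 2 + 1) * AA θ * FC.hsNorm s θ ^ 2 := h0
  nlinarith

end Nonlinear3

section StochSymbol
open MeasureTheory Set Filter Topology

/-- The symbol `mm` at real arguments. -/
def mur (s ε x : ℝ) : ℝ := (1 + x ^ 2) ^ (s / 2) * (1 + ε ^ 2 * x ^ 2)⁻¹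

/-- Logarithmic derivative of `mur`. -/
def rho (s ε x : ℝ) : ℝ := s * (x / (1 + x ^ 2)) - 2 * ε ^ 2 * (x / (1 + ε ^ 2 * x ^ 2))

/-- Derivative of `rho`. -/
def rho' (s ε x : ℝ) : ℝ := s * ((1 - x ^ 2) / (1 + x ^ 2) ^ 2)
  - 2 * ε ^ 2 * ((1 - ε ^ 2 * x ^ 2) / (1 + ε ^ 2 * x ^ 2) ^ 2)

/-- `x m(x)²`. -/
def NN (s ε x : ℝ) : ℝ := x * mur s ε x ^ 2

/-- First derivative of `NN`. -/
def DD (s ε x : ℝ) : ℝ := mur s ε x ^ 2 * (1 + 2 * (x * rho s ε x))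

/-- Second derivative of `NN`. -/
def DD2 (s ε x : ℝ) : ℝ :=
  mur s ε x ^ 2 * (4 * rho s ε x + 4 * (x * rho s ε x) * rho s ε x + 2 * (x * rho' s ε x))

theorem mur_pos (s ε x : ℝ) : 0 < mur s ε x := by unfold mur; positivity

theorem mur_deriv (s ε x : ℝ) : HasDerivAt (mur s ε) (mur s ε x * rho s ε x) x := by
  have hz : 0 < 1 + x ^ 2 := by positivity
  have he : 0 < 1 + ε ^ 2 * x ^ 2 := by positivity
  have h1 : HasDerivAt (fun x : ℝ => 1 + x ^ 2) (2 * x) x := by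
    simpa using (hasDerivAt_pow 2 x).const_add 1
  have h2 : HasDerivAt (fun x : ℝ => 1 + ε ^ 2 * x ^ 2) (ε ^ 2 * (2 * x)) x := by
    simpa using ((hasDerivAt_pow 2 x).const_mul (ε ^ 2)).const_add 1
  have h3 := (h1.rpow_const (p := s / 2) (Or.inl hz.ne')).mul (h2.inv he.ne')
  refine h3.congr_deriv ?_
  simp only [mur, rho, Pi.inv_apply]
  rw [Real.rpow_sub_one hz.ne']
  field_simp
  ring

theorem rho_deriv (s ε x : ℝ) : HasDerivAt (rho s ε) (rho' s ε x) x := by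
  have hz : 0 < 1 + x ^ 2 := by positivity
  have he : 0 < 1 + ε ^ 2 * x ^ 2 := by positivity
  have h1 : HasDerivAt (fun x : ℝ => 1 + x ^ 2) (2 * x) x := by
    simpa using (hasDerivAt_pow 2 x).const_add 1
  have h2 : HasDerivAt (fun x : ℝ => 1 + ε ^ 2 * x ^ 2) (ε ^ 2 * (2 * x)) x := by
    simpa using ((hasDerivAt_pow 2 x).const_mul (ε ^ 2)).const_add 1
  have h3 := (((hasDerivAt_id x).div h1 hz.ne').const_mul s).sub
    (((hasDerivAt_id x).div h2 he.ne').const_mul (2 * ε ^ 2))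
  refine h3.congr_deriv ?_
  simp only [rho', id]
  congr 3
  · ring
  · ring

theorem NN_deriv (s ε x : ℝ) : HasDerivAt (NN s ε) (DD s ε x) x := by
  have h := (hasDerivAt_id x).mul ((mur_deriv s ε x).pow 2)
  refine h.congr_deriv ?_
  simp only [DD, id]
  push_cast
  simp
  ring

theorem DD_deriv (s ε x : ℝ) : HasDerivAt (DD s ε) (DD2 s ε x) x := by
  have h := ((mur_deriv s ε x).pow 2).mul
    ((((hasDerivAt_id x).mul (rho_deriv s ε x)).const_mul 2).const_add 1)
  refine h.congr_deriv ?_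
  simp only [DD2, id]
  simp
  ring

theorem rho_bounds {s ε : ℝ} (hs : 0 ≤ s) (hε : ε ∈ Ioo (0 : ℝ) 1) (x : ℝ) :
    |rho s ε x| ≤ s + 2 ∧ |x * rho s ε x| ≤ s + 2 ∧ |x * rho' s ε x| ≤ s + 2
      ∧ |x * (x * rho' s ε x)| ≤ s + 2 := by
  have hz : 0 < 1 + x ^ 2 := by positivity
  have he : 0 < 1 + ε ^ 2 * x ^ 2 := by positivity
  have hε2 : ε ^ 2 ≤ 1 := by nlinarith [hε.1, hε.2]
  have hε0 : 0 ≤ ε ^ 2 := sq_nonneg _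
  have hx : |x| ≤ 1 + x ^ 2 := by
    rw [abs_le]; constructor <;> nlinarith [sq_nonneg (x + 1), sq_nonneg (x - 1)]
  have hle : ε ^ 2 * (1 + x ^ 2) ≤ 1 + ε ^ 2 * x ^ 2 := by nlinarith
  -- generic
  have comb : ∀ A B : ℝ, |A| ≤ 1 → |B| ≤ 1 → |s * A - 2 * B| ≤ s + 2 := by
    intro A B hA hB
    rw [abs_le] at hA hB ⊢
    constructor <;> nlinarith
  have q1 : |x / (1 + x ^ 2)| ≤ 1 := by
    rw [abs_div, abs_of_pos hz, div_le_one hz]; exact hx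
  have q2 : |ε ^ 2 * (x / (1 + ε ^ 2 * x ^ 2))| ≤ 1 := by
    rw [← mul_div_assoc, abs_div, abs_of_pos he, div_le_one he, abs_mul, abs_of_nonneg hε0]
    nlinarith
  have q3 : |x * (x / (1 + x ^ 2))| ≤ 1 := by
    rw [← mul_div_assoc, abs_div, abs_of_pos hz, div_le_one hz, ← pow_two,
      abs_of_nonneg (sq_nonneg x)]
    linarith
  have q4 : |x * (ε ^ 2 * (x / (1 + ε ^ 2 * x ^ 2)))| ≤ 1 := by
    rw [show x * (ε ^ 2 * (x / (1 + ε ^ 2 * x ^ 2))) = (ε ^ 2 * x ^ 2) / (1 + ε ^ 2 * x ^ 2) by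
      ring, abs_div, abs_of_pos he, div_le_one he, abs_of_nonneg (by positivity)]
    linarith
  have n1 : |1 - x ^ 2| ≤ 1 + x ^ 2 := by rw [abs_le]; constructor <;> nlinarith
  have n2 : |1 - ε ^ 2 * x ^ 2| ≤ 1 + ε ^ 2 * x ^ 2 := by
    have : 0 ≤ ε ^ 2 * x ^ 2 := by positivity
    rw [abs_le]; constructor <;> linarith
  have gen : ∀ y : ℝ, |y| ≤ 1 + x ^ 2 → |y * rho' s ε x| ≤ s + 2 := by
    intro y hy
    have e : y * rho' s ε x = s * (y * ((1 - x ^ 2) / (1 + x ^ 2) ^ 2))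
        - 2 * (y * (ε ^ 2 * ((1 - ε ^ 2 * x ^ 2) / (1 + ε ^ 2 * x ^ 2) ^ 2))) := by
      unfold rho'; ring
    rw [e]
    refine comb _ _ ?_ ?_
    · rw [← mul_div_assoc, abs_div, abs_of_pos (by positivity : 0 < (1 + x ^ 2) ^ 2),
        div_le_one (by positivity), abs_mul, pow_two (1 + x ^ 2)]
      exact mul_le_mul hy n1 (abs_nonneg _) hz.le
    · rw [← mul_div_assoc, ← mul_div_assoc, abs_div,
        abs_of_pos (by positivity : 0 < (1 + ε ^ 2 * x ^ 2) ^ 2),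
        div_le_one (by positivity), abs_mul, abs_mul, pow_two (1 + ε ^ 2 * x ^ 2), ← mul_assoc,
        abs_of_nonneg hε0]
      refine mul_le_mul ?_ n2 (abs_nonneg _) he.le
      nlinarith
  refine ⟨?_, ?_, ?_, ?_⟩
  · have := comb _ _ q1 q2
    unfold rho
    rwa [mul_assoc 2]
  · have := comb _ _ q3 q4
    unfold rho
    convert this using 2
    ring
  · exact gen x hx
  · rw [← mul_assoc]
    refine gen _ ?_
    rw [← pow_two, abs_of_nonneg (sq_nonneg x)]; linarith

/-- The constant for derivative bounds. -/
def c0 (s : ℝ) : ℝ := 1 + 8 * (s + 2) + 4 * (s + 2) ^ 2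

theorem DD_bounds {s ε : ℝ} (hs : 0 ≤ s) (hε : ε ∈ Ioo (0 : ℝ) 1) (x : ℝ) :
    |DD2 s ε x| ≤ c0 s * mur s ε x ^ 2 ∧ |x * DD2 s ε x| ≤ c0 s * mur s ε x ^ 2 ∧
    |DD s ε x + x * DD2 s ε x| ≤ c0 s * mur s ε x ^ 2 := by
  obtain ⟨h1, h2, h3, h4⟩ := rho_bounds hs hε x
  have hm : 0 ≤ mur s ε x ^ 2 := sq_nonneg _
  have hc : 0 ≤ s + 2 := by linarith
  have gen : ∀ Y, |Y| ≤ c0 s → |mur s ε x ^ 2 * Y| ≤ c0 s * mur s ε x ^ 2 := by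
    intro Y hY
    rw [abs_mul, abs_of_nonneg hm, mul_comm]
    gcongr
  have m1 : |x * rho s ε x * rho s ε x| ≤ (s + 2) ^ 2 := by
    rw [abs_mul, pow_two]; gcongr
  have m2 : |x * rho s ε x * (x * rho s ε x)| ≤ (s + 2) ^ 2 := by
    rw [abs_mul, pow_two]; gcongr
  rw [abs_le] at h1 h2 h3 h4 m1 m2
  refine ⟨?_, ?_, ?_⟩
  · unfold DD2
    refine gen _ ?_
    unfold c0
    rw [abs_le]; constructor <;> linarith [h1.1, h1.2]
  · have e : x * DD2 s ε x = mur s ε x ^ 2 * (4 * (x * rho s ε x)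
        + 4 * (x * rho s ε x * (x * rho s ε x)) + 2 * (x * (x * rho' s ε x))) := by
      unfold DD2; ring
    rw [e]
    refine gen _ ?_
    unfold c0
    rw [abs_le]; constructor <;> linarith [h1.1, h1.2]
  · have e : DD s ε x + x * DD2 s ε x = mur s ε x ^ 2 * (1 + 6 * (x * rho s ε x)
        + 4 * (x * rho s ε x * (x * rho s ε x)) + 2 * (x * (x * rho' s ε x))) := by
      unfold DD2 DD; ring
    rw [e]
    refine gen _ ?_
    unfold c0
    rw [abs_le]; constructor <;> linarith [h1.1, h1.2]

theorem mvt {f f' : ℝ → ℝ} (hf : ∀ x, HasDerivAt f (f' x) x) {a b K x y : ℝ}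
    (hK : ∀ z ∈ Icc a b, |f' z| ≤ K) (hx : x ∈ Icc a b) (hy : y ∈ Icc a b) :
    |f x - f y| ≤ K * |x - y| := by
  have := (convex_Icc a b).norm_image_sub_le_of_norm_hasDerivWithin_le (f := f) (f' := f')
    (C := K) (fun z _ => (hf z).hasDerivWithinAt) hK hy hx
  simpa [Real.norm_eq_abs] using this

theorem c0_nonneg {s : ℝ} (hs : 0 ≤ s) : 0 ≤ c0 s := by unfold c0; positivity

theorem taylor_rem {s ε : ℝ} (hs : 0 ≤ s) (hε : ε ∈ Ioo (0 : ℝ) 1) {a b R ν l y : ℝ}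
    (hR : b - a = 2 * R) (hν : ∀ z ∈ Icc a b, mur s ε z ^ 2 ≤ ν)
    (hl : l ∈ Icc a b) (hy : y ∈ Icc a b) :
    |l| * |NN s ε y - NN s ε l - DD s ε l * (y - l)| ≤ 2 * c0 s * ν * (1 + R) * (2 * R) * |y - l| := by
  have hR0 : 0 ≤ R := by linarith [hl.1, hl.2]
  have hc := c0_nonneg hs
  have hν0 : 0 ≤ ν := (sq_nonneg _).trans (hν l hl)
  have hl1 : 0 < 1 + |l| := by positivity
  set K2 := 2 * c0 s * ν * (1 + R) / (1 + |l|) with hK2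
  have dist : ∀ z ∈ Icc a b, ∀ w ∈ Icc a b, |z - w| ≤ 2 * R := by
    intro z hz w hw
    rw [abs_le]; constructor <;> linarith [hz.1, hz.2, hw.1, hw.2]
  have k2 : ∀ z ∈ Icc a b, |DD2 s ε z| ≤ K2 := by
    intro z hz
    rw [hK2, le_div_iff₀ hl1]
    obtain ⟨b1, b2, _⟩ := DD_bounds hs hε z
    have hn : c0 s * mur s ε z ^ 2 ≤ c0 s * ν := mul_le_mul_of_nonneg_left (hν z hz) hc
    have hlz : |l| ≤ |z| + 2 * R := by
      have h5 := dist l hl z hz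
      have : |l| ≤ |z| + |l - z| := by
        have := abs_add_le z (l - z); rwa [add_sub_cancel] at this
      linarith
    rw [abs_mul] at b2
    have p := abs_nonneg (DD2 s ε z)
    have h6 : |DD2 s ε z| * (1 + |l|) ≤ |DD2 s ε z| * (1 + (|z| + 2 * R)) := by gcongr
    have h7 : |DD2 s ε z| * (2 * R) ≤ (c0 s * ν) * (2 * R) := by
      refine mul_le_mul_of_nonneg_right (b1.trans hn) (by positivity)
    nlinarith
  have d1 : ∀ z ∈ Icc a b, |DD s ε z - DD s ε l| ≤ K2 * (2 * R) := by
    intro z hz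
    refine (mvt (DD_deriv s ε) k2 hz hl).trans ?_
    have := dist z hz l hl
    have : 0 ≤ K2 := (abs_nonneg _).trans (k2 l hl)
    gcongr
  have h1 : ∀ x, HasDerivAt (fun x => NN s ε x - DD s ε l * x) (DD s ε x - DD s ε l) x := by
    intro x
    have := (NN_deriv s ε x).sub ((hasDerivAt_id x).const_mul (DD s ε l))
    exact this.congr_deriv (by simp)
  have h2 := mvt h1 d1 hy hl
  have e : NN s ε y - DD s ε l * y - (NN s ε l - DD s ε l * l)
      = NN s ε y - NN s ε l - DD s ε l * (y - l) := by ring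
  rw [e] at h2
  have h3 : |l| * K2 ≤ 2 * c0 s * ν * (1 + R) := by
    rw [hK2, ← mul_div_assoc, div_le_iff₀ hl1]
    have : 0 ≤ 2 * c0 s * ν * (1 + R) := by positivity
    nlinarith
  calc _ ≤ |l| * (K2 * (2 * R) * |y - l|) := by gcongr
    _ = (|l| * K2) * (2 * R) * |y - l| := by ring
    _ ≤ _ := by gcongr

/-- The commutator symbol. -/
def SS (s ε k p q : ℝ) : ℝ :=
  (k - p) * (NN s ε k + NN s ε (k - p - q) - 2 * NN s ε (k - p))
    + (k - q) * (NN s ε k + NN s ε (k - p - q) - 2 * NN s ε (k - q))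

theorem SS_bound1 {s ε : ℝ} (hs : 0 ≤ s) (hε : ε ∈ Ioo (0 : ℝ) 1) (k p q ν : ℝ)
    (hν : ∀ z ∈ Icc (k - (|p| + |q|)) (k + (|p| + |q|)), mur s ε z ^ 2 ≤ ν) :
    |SS s ε k p q| ≤ 9 * c0 s * ν * (1 + (|p| + |q|)) * (|p| + |q|) ^ 2 := by
  set R := |p| + |q| with hR
  have hR0 : 0 ≤ R := by positivity
  have p1 := neg_abs_le p
  have p2 := le_abs_self p
  have q1 := neg_abs_le q
  have q2 := le_abs_self q
  have a1 := abs_nonneg p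
  have a2 := abs_nonneg q
  have mk : k ∈ Icc (k - R) (k + R) := ⟨by linarith, by linarith⟩
  have mj : k - p - q ∈ Icc (k - R) (k + R) := ⟨by linarith, by linarith⟩
  have ml : k - p ∈ Icc (k - R) (k + R) := ⟨by linarith, by linarith⟩
  have ml' : k - q ∈ Icc (k - R) (k + R) := ⟨by linarith, by linarith⟩
  have hw : k + R - (k - R) = 2 * R := by ring
  have hc := c0_nonneg hs
  have hν0 : 0 ≤ ν := (sq_nonneg _).trans (hν k mk)
  have t1 := taylor_rem hs hε hw hν ml mk
  have t2 := taylor_rem hs hε hw hν ml mj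
  have t3 := taylor_rem hs hε hw hν ml' mk
  have t4 := taylor_rem hs hε hw hν ml' mj
  rw [show k - (k - p) = p by ring] at t1
  rw [show k - p - q - (k - p) = -q by ring, abs_neg] at t2
  rw [show k - (k - q) = q by ring] at t3
  rw [show k - p - q - (k - q) = -p by ring, abs_neg] at t4
  rw [← abs_mul] at t1 t2 t3 t4
  have hE : ∀ x, HasDerivAt (fun x => x * DD s ε x) (DD s ε x + x * DD2 s ε x) x := by
    intro x
    exact ((hasDerivAt_id x).mul (DD_deriv s ε x)).congr_deriv (by simp)
  have t5 := mvt hE (K := c0 s * ν) (fun z hz =>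
    ((DD_bounds hs hε z).2.2).trans (mul_le_mul_of_nonneg_left (hν z hz) hc)) ml ml'
  rw [show k - p - (k - q) = q - p by ring] at t5
  have hpq : |q - p| ≤ R := by rw [abs_le]; constructor <;> linarith
  have hpq' : |p - q| ≤ R := by rw [abs_le]; constructor <;> linarith
  set T1 := (k - p) * (NN s ε k - NN s ε (k - p) - DD s ε (k - p) * p)
  set T2 := (k - p) * (NN s ε (k - p - q) - NN s ε (k - p) - DD s ε (k - p) * -q)
  set T3 := (k - q) * (NN s ε k - NN s ε (k - q) - DD s ε (k - q) * q)
  set T4 := (k - q) * (NN s ε (k - p - q) - NN s ε (k - q) - DD s ε (k - q) * -p)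
  set T5 := (k - p) * DD s ε (k - p) - (k - q) * DD s ε (k - q)
  have e : SS s ε k p q = T1 + T2 + T3 + T4 + (p - q) * T5 := by
    unfold SS; ring
  have t6 : |(p - q) * T5| ≤ c0 s * ν * (1 + R) * R ^ 2 := by
    rw [abs_mul]
    calc |p - q| * |T5| ≤ R * (c0 s * ν * R) := by
          refine mul_le_mul hpq' (t5.trans (by gcongr)) (abs_nonneg _) hR0
      _ = c0 s * ν * 1 * R ^ 2 := by ring
      _ ≤ _ := by gcongr; linarith
  have tri : |SS s ε k p q| ≤ |T1| + |T2| + |T3| + |T4| + |(p - q) * T5| := by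
    rw [e]
    exact (abs_add_le _ _).trans (add_le_add ((abs_add_le _ _).trans (add_le_add
      ((abs_add_le _ _).trans (add_le_add (abs_add_le _ _) le_rfl)) le_rfl)) le_rfl)
  have hsum : |T1| + |T2| + |T3| + |T4| ≤ 8 * c0 s * ν * (1 + R) * R ^ 2 := by
    have : 2 * c0 s * ν * (1 + R) * (2 * R) * (2 * (|p| + |q|)) = 8 * c0 s * ν * (1 + R) * R ^ 2 := by
      rw [← hR]; ring
    linarith
  linarith

end StochSymbol

section StochSymbol2
open MeasureTheory Set Filter Topology

theorem mur_int (s ε : ℝ) (a : ℤ) : mur s ε (a : ℝ) = mm s ε a := rfl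

theorem mur_peetre {s ε : ℝ} (hs : 0 ≤ s) (hε : ε ∈ Ioo (0 : ℝ) 1) (x y W : ℝ)
    (hW : 1 + (y - x) ^ 2 ≤ W) : mur s ε y ≤ (2 * W) ^ (s / 2 + 1) * mur s ε x := by
  have hW0 : 0 < W := lt_of_lt_of_le (by positivity) hW
  have hε2 : ε ^ 2 ≤ 1 := by nlinarith [hε.1, hε.2]
  have h1 : 1 + y ^ 2 ≤ 2 * W * (1 + x ^ 2) := by
    have : 1 + y ^ 2 ≤ 2 * (1 + (y - x) ^ 2) * (1 + x ^ 2) := by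
      nlinarith [sq_nonneg (y - 2 * x), sq_nonneg ((y - x) * x)]
    refine this.trans ?_
    gcongr
  have h2 : 1 + ε ^ 2 * x ^ 2 ≤ 2 * W * (1 + ε ^ 2 * y ^ 2) := by
    have h3 : x ^ 2 ≤ 2 * y ^ 2 + 2 * (y - x) ^ 2 := by nlinarith [sq_nonneg (2 * y - x)]
    have h4 : ε ^ 2 * x ^ 2 ≤ 2 * (ε ^ 2 * y ^ 2) + 2 * (y - x) ^ 2 := by
      have a1 := mul_le_mul_of_nonneg_left h3 (sq_nonneg ε)
      have a2 := mul_le_mul_of_nonneg_right hε2 (sq_nonneg (y - x))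
      nlinarith
    have h5 : 0 ≤ ε ^ 2 * y ^ 2 := by positivity
    have h6 : 2 * (1 + (y - x) ^ 2) * (1 + ε ^ 2 * y ^ 2) ≤ 2 * W * (1 + ε ^ 2 * y ^ 2) := by
      gcongr
    nlinarith [mul_nonneg (sq_nonneg (y - x)) h5]
  have e1 : (1 + y ^ 2) ^ (s / 2) ≤ (2 * W) ^ (s / 2) * (1 + x ^ 2) ^ (s / 2) := by
    rw [← Real.mul_rpow (by positivity) (by positivity)]
    exact Real.rpow_le_rpow (by positivity) h1 (by positivity)
  have e2 : (1 + ε ^ 2 * y ^ 2)⁻¹ ≤ (2 * W) * (1 + ε ^ 2 * x ^ 2)⁻¹ := by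
    rw [inv_le_iff_one_le_mul₀ (by positivity), mul_assoc, inv_mul_eq_div, ← mul_div_assoc,
      le_div_iff₀ (by positivity), one_mul]
    exact h2
  unfold mur
  rw [Real.rpow_add (by positivity), Real.rpow_one]
  calc _ ≤ ((2 * W) ^ (s / 2) * (1 + x ^ 2) ^ (s / 2)) * ((2 * W) * (1 + ε ^ 2 * x ^ 2)⁻¹) := by
        gcongr
    _ = _ := by ring

theorem SS_bound {s ε : ℝ} (hs : 0 ≤ s) (hε : ε ∈ Ioo (0 : ℝ) 1) (k p q : ℤ) :
    |SS s ε k p q| ≤ 9 * c0 s * 16 ^ (s + 4) * (zz p ^ (s + 4) * zz q ^ (s + 4))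
      * (mm s ε (k - p - q) * mm s ε k) := by
  set R : ℝ := |(p : ℝ)| + |(q : ℝ)| with hR
  have hR0 : 0 ≤ R := by positivity
  set W : ℝ := 1 + 4 * R ^ 2 with hW
  have hW0 : 0 < W := by positivity
  have hc := c0_nonneg hs
  have p1 := neg_abs_le (p : ℝ)
  have p2 := le_abs_self (p : ℝ)
  have q1 := neg_abs_le (q : ℝ)
  have q2 := le_abs_self (q : ℝ)
  have mk := mm_pos s ε k
  have mj := mm_pos s ε (k - p - q)
  have hν : ∀ z ∈ Icc ((k : ℝ) - R) ((k : ℝ) + R),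
      mur s ε z ^ 2 ≤ (2 * W) ^ (s + 2) * (mm s ε (k - p - q) * mm s ε k) := by
    intro z hz
    have b1 : mur s ε z ≤ (2 * W) ^ (s / 2 + 1) * mm s ε k := by
      rw [← mur_int]
      refine mur_peetre hs hε _ _ _ ?_
      have : (z - k) ^ 2 ≤ R ^ 2 := sq_le_sq' (by linarith [hz.1]) (by linarith [hz.2])
      rw [hW]; nlinarith [sq_nonneg R]
    have b2 : mur s ε z ≤ (2 * W) ^ (s / 2 + 1) * mm s ε (k - p - q) := by
      rw [← mur_int]
      refine mur_peetre hs hε _ _ _ ?_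
      push_cast
      have : (z - (k - p - q)) ^ 2 ≤ (2 * R) ^ 2 :=
        sq_le_sq' (by linarith [hz.1]) (by linarith [hz.2])
      rw [hW]; nlinarith [sq_nonneg R]
    have e : (2 * W) ^ (s + 2) = (2 * W) ^ (s / 2 + 1) * (2 * W) ^ (s / 2 + 1) := by
      rw [← Real.rpow_add (by positivity)]; congr 1; ring
    rw [e, pow_two]
    calc mur s ε z * mur s ε z ≤ ((2 * W) ^ (s / 2 + 1) * mm s ε (k - p - q))
          * ((2 * W) ^ (s / 2 + 1) * mm s ε k) :=
          mul_le_mul b2 b1 (mur_pos _ _ _).le (by positivity)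
      _ = _ := by ring
  have h1 := SS_bound1 hs hε k p q _ hν
  rw [← hR] at h1
  have h2 : (1 + R) * R ^ 2 ≤ (2 * W) ^ (2 : ℝ) := by
    rw [Real.rpow_two, hW]
    nlinarith [sq_nonneg (R ^ 2 - R), sq_nonneg R, sq_nonneg (R ^ 2)]
  have h3 : (2 * W) ^ (s + 2) * (2 * W) ^ (2 : ℝ) = (2 * W) ^ (s + 4) := by
    rw [← Real.rpow_add (by positivity)]; congr 1; ring
  have h4 : 2 * W ≤ 16 * (zz p * zz q) := by
    have : R ^ 2 ≤ 2 * (p : ℝ) ^ 2 + 2 * (q : ℝ) ^ 2 := by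
      have := add_sq_le (a := |(p : ℝ)|) (b := |(q : ℝ)|)
      rw [sq_abs, sq_abs] at this
      rw [hR]; linarith
    rw [hW]; unfold zz
    nlinarith [mul_nonneg (sq_nonneg (p : ℝ)) (sq_nonneg (q : ℝ))]
  have h5 : (2 * W) ^ (s + 4) ≤ 16 ^ (s + 4) * (zz p ^ (s + 4) * zz q ^ (s + 4)) := by
    rw [← Real.mul_rpow (zz_pos _).le (zz_pos _).le,
      ← Real.mul_rpow (by norm_num) (mul_pos (zz_pos _) (zz_pos _)).le]
    exact Real.rpow_le_rpow (by positivity) h4 (by linarith)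
  set Y := mm s ε (k - p - q) * mm s ε k with hY
  have hY0 : 0 < Y := mul_pos mj mk
  calc |SS s ε k p q| ≤ 9 * c0 s * ((2 * W) ^ (s + 2) * Y) * (1 + R) * R ^ 2 := h1
    _ = 9 * c0 s * (2 * W) ^ (s + 2) * ((1 + R) * R ^ 2) * Y := by ring
    _ ≤ 9 * c0 s * (2 * W) ^ (s + 2) * (2 * W) ^ (2 : ℝ) * Y := by gcongr
    _ = 9 * c0 s * (2 * W) ^ (s + 4) * Y := by rw [← h3]; ring
    _ ≤ 9 * c0 s * (16 ^ (s + 4) * (zz p ^ (s + 4) * zz q ^ (s + 4))) * Y := by gcongr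
    _ = _ := by ring

theorem sq_mul_mm (s : ℝ) {ε : ℝ} (hε : ε ∈ Ioo (0 : ℝ) 1) (k : ℤ) :
    zz k * mm s ε k ^ 2 ≤ (ε ^ 2)⁻¹ * (zz k ^ (s / 2) * zz k ^ (s / 2)) := by
  have h := mm_sq_le s hε k
  have hz := zz_pos k
  rw [Real.rpow_sub_one hz.ne'] at h
  calc zz k * mm s ε k ^ 2 ≤ zz k * ((ε ^ 2)⁻¹ * (zz k ^ (s / 2) * (zz k ^ (s / 2) / zz k))) := by
        gcongr
    _ = _ := by field_simp

/-- Raw (`ε`-dependent) bounds; here `l = j + q`, `k = j + p + q`. -/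
theorem raw_bound {s ε : ℝ} (hs : 0 ≤ s) (hε : ε ∈ Ioo (0 : ℝ) 1) (j p q : ℤ) :
    |((j + (p + q) : ℤ) : ℝ) * ((j + q : ℤ) : ℝ) * mm s ε (j + (p + q)) ^ 2|
      ≤ ((ε ^ 2)⁻¹ * 2 * 4 ^ s) * (zz p ^ (s + 4) * zz q ^ (s + 4))
        * (zz j ^ (s / 2) * zz (j + (p + q)) ^ (s / 2)) ∧
    |((j + q : ℤ) : ℝ) ^ 2 * mm s ε (j + q) ^ 2|
      ≤ ((ε ^ 2)⁻¹ * 2 * 4 ^ s) * (zz p ^ (s + 4) * zz q ^ (s + 4))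
        * (zz j ^ (s / 2) * zz (j + (p + q)) ^ (s / 2)) := by
  have hε0 : 0 < ε ^ 2 := by have := hε.1; positivity
  set k := j + (p + q) with hk
  set l := j + q with hl
  have zp := zz_pos p
  have zq := zz_pos q
  have zj := zz_pos j
  have zk := zz_pos k
  have zl := zz_pos l
  have hp1 := one_le_zz p
  have hq1 := one_le_zz q
  have r1 : zz l ≤ 2 * zz q * zz j := zz_peetre j q
  have r2 : zz l ≤ 2 * zz p * zz k := by
    have := zz_peetre k (-p)
    rw [zz_neg] at this
    rwa [show k + -p = l by rw [hk, hl]; ring] at this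
  have r3 : zz k ≤ 4 * (zz p * zz q) * zz j := by
    have := zz_peetre l p
    rw [show l + p = k by rw [hk, hl]; ring] at this
    nlinarith [mul_le_mul_of_nonneg_left r1 (by positivity : 0 ≤ 2 * zz p)]
  have hpow : ∀ y t : ℝ, 1 ≤ y → t ≤ s + 4 → y ^ t ≤ y ^ (s + 4) := fun y t hy ht =>
    Real.rpow_le_rpow_of_exponent_le hy ht
  have four : (4 : ℝ) ^ (s / 2) ≤ 4 ^ s :=
    Real.rpow_le_rpow_of_exponent_le (by norm_num) (by linarith)
  constructor
  · have h1 : |(k : ℝ) * (l : ℝ)| ≤ 2 * zz p * zz k := by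
      refine abs_le_of_sq_le_sq ?_ (by positivity)
      have a1 : (k : ℝ) ^ 2 ≤ zz k := by unfold zz; linarith
      have a2 : (l : ℝ) ^ 2 ≤ 2 * zz p * zz k := le_trans (by unfold zz; linarith) r2
      rw [mul_pow]
      calc (k : ℝ) ^ 2 * (l : ℝ) ^ 2 ≤ zz k * (2 * zz p * zz k) := by gcongr
        _ ≤ (2 * zz p * zz k) * (2 * zz p * zz k) := by
          refine mul_le_mul_of_nonneg_right ?_ (by positivity)
          nlinarith
        _ = _ := by ring
    have h2 := sq_mul_mm s hε k
    have h3 : zz k ^ (s / 2) ≤ 4 ^ (s / 2) * (zz p ^ (s / 2) * zz q ^ (s / 2)) * zz j ^ (s / 2) := by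
      rw [← Real.mul_rpow zp.le zq.le, ← Real.mul_rpow (by norm_num) (by positivity),
        ← Real.mul_rpow (by positivity) zj.le]
      exact Real.rpow_le_rpow zk.le r3 (by positivity)
    have h4 : zz p * zz p ^ (s / 2) ≤ zz p ^ (s + 4) := by
      rw [mul_comm, ← Real.rpow_add_one zp.ne']
      exact hpow _ _ hp1 (by linarith)
    have h5 : zz q ^ (s / 2) ≤ zz q ^ (s + 4) := hpow _ _ hq1 (by linarith)
    rw [abs_mul, abs_of_nonneg (sq_nonneg (mm s ε k))]
    calc |(k : ℝ) * (l : ℝ)| * mm s ε k ^ 2 ≤ 2 * zz p * zz k * mm s ε k ^ 2 := by gcongr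
      _ = 2 * zz p * (zz k * mm s ε k ^ 2) := by ring
      _ ≤ 2 * zz p * ((ε ^ 2)⁻¹ * (zz k ^ (s / 2) * zz k ^ (s / 2))) := by gcongr
      _ ≤ 2 * zz p * ((ε ^ 2)⁻¹ * ((4 ^ (s / 2) * (zz p ^ (s / 2) * zz q ^ (s / 2)) * zz j ^ (s / 2))
            * zz k ^ (s / 2))) := by gcongr
      _ = ((ε ^ 2)⁻¹ * 2 * 4 ^ (s / 2)) * ((zz p * zz p ^ (s / 2)) * zz q ^ (s / 2))
            * (zz j ^ (s / 2) * zz k ^ (s / 2)) := by ring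
      _ ≤ _ := by gcongr
  · have h2 := sq_mul_mm s hε l
    have a1 : (l : ℝ) ^ 2 ≤ zz l := by unfold zz; linarith
    have h3 : zz l ^ (s / 2) ≤ 2 ^ (s / 2) * zz p ^ (s / 2) * zz k ^ (s / 2) := by
      rw [← Real.mul_rpow (by norm_num) zp.le, ← Real.mul_rpow (by positivity) zk.le]
      exact Real.rpow_le_rpow zl.le r2 (by positivity)
    have h4 : zz l ^ (s / 2) ≤ 2 ^ (s / 2) * zz q ^ (s / 2) * zz j ^ (s / 2) := by
      rw [← Real.mul_rpow (by norm_num) zq.le, ← Real.mul_rpow (by positivity) zj.le]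
      exact Real.rpow_le_rpow zl.le r1 (by positivity)
    have h5 : zz q ^ (s / 2) ≤ zz q ^ (s + 4) := hpow _ _ hq1 (by linarith)
    have h6 : zz p ^ (s / 2) ≤ zz p ^ (s + 4) := hpow _ _ hp1 (by linarith)
    have h7 : (2 : ℝ) ^ (s / 2) * 2 ^ (s / 2) ≤ 2 * 4 ^ s := by
      rw [← Real.mul_rpow (by norm_num) (by norm_num)]
      norm_num
      have : (0 : ℝ) ≤ 4 ^ s := by positivity
      linarith
    rw [abs_of_nonneg (by positivity)]
    calc (l : ℝ) ^ 2 * mm s ε l ^ 2 ≤ zz l * mm s ε l ^ 2 := by gcongr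
      _ ≤ (ε ^ 2)⁻¹ * (zz l ^ (s / 2) * zz l ^ (s / 2)) := h2
      _ ≤ (ε ^ 2)⁻¹ * ((2 ^ (s / 2) * zz p ^ (s / 2) * zz k ^ (s / 2))
            * (2 ^ (s / 2) * zz q ^ (s / 2) * zz j ^ (s / 2))) := by gcongr
      _ = (ε ^ 2)⁻¹ * (2 ^ (s / 2) * 2 ^ (s / 2)) * (zz p ^ (s / 2) * zz q ^ (s / 2))
            * (zz j ^ (s / 2) * zz k ^ (s / 2)) := by ring
      _ ≤ (ε ^ 2)⁻¹ * (2 * 4 ^ s) * (zz p ^ (s + 4) * zz q ^ (s + 4))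
            * (zz j ^ (s / 2) * zz k ^ (s / 2)) := by gcongr
      _ = _ := by ring

end StochSymbol2

section LieIdentities
open MeasureTheory Set Filter Topology

theorem abs_le_zz (k : ℤ) : |(k : ℝ)| ≤ zz k := by
  unfold zz
  rw [abs_le]; constructor <;> nlinarith [sq_nonneg ((k : ℝ) - 1), sq_nonneg ((k : ℝ) + 1)]

theorem zz_sub_le (k j : ℤ) : zz (k - j) ≤ 2 * zz j * zz k := by
  have := zz_peetre k (-j)
  rwa [zz_neg, ← sub_eq_add_neg] at this

theorem lie_eq {ξ c : FC} (h2 : Summable fun p => zz p ^ 2 * ‖ξ p‖) {K : ℝ} (hK : 0 ≤ K)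
    (hc : ∀ k, ‖c k‖ ≤ K * zz k) (k : ℤ) :
    FC.lie ξ c k = Complex.I * (k : ℂ) * ∑' p : ℤ, ξ p * c (k - p) := by
  have zk := zz_pos k
  have s1 : Summable fun j : ℤ => ξ j * (Complex.I * ((k - j : ℤ) : ℂ) * c (k - j)) := by
    refine Summable.of_norm_bounded (h2.mul_left (K * 4 * zz k ^ 2)) (fun j => ?_)
    rw [norm_mul, norm_mul, norm_mul, Complex.norm_I, Complex.norm_intCast, one_mul]
    have a1 := abs_le_zz (k - j)
    have a2 := hc (k - j)
    have a3 := zz_sub_le k j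
    have zj := zz_pos j
    have zkj := zz_pos (k - j)
    calc ‖ξ j‖ * (|((k - j : ℤ) : ℝ)| * ‖c (k - j)‖)
        ≤ ‖ξ j‖ * (zz (k - j) * (K * zz (k - j))) := by gcongr
      _ ≤ ‖ξ j‖ * ((2 * zz j * zz k) * (K * (2 * zz j * zz k))) := by gcongr
      _ = _ := by ring
  have s2 : Summable fun j : ℤ => Complex.I * ((j : ℤ) : ℂ) * ξ j * c (k - j) := by
    refine Summable.of_norm_bounded (h2.mul_left (K * 2 * zz k)) (fun j => ?_)
    rw [norm_mul, norm_mul, norm_mul, Complex.norm_I, Complex.norm_intCast, one_mul]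
    have a1 := abs_le_zz j
    have a2 := hc (k - j)
    have a3 := zz_sub_le k j
    have zj := zz_pos j
    calc |(j : ℝ)| * ‖ξ j‖ * ‖c (k - j)‖
        ≤ zz j * ‖ξ j‖ * (K * zz (k - j)) := by gcongr
      _ ≤ zz j * ‖ξ j‖ * (K * (2 * zz j * zz k)) := by gcongr
      _ = _ := by ring
  show (∑' j : ℤ, ξ j * (Complex.I * ((k - j : ℤ) : ℂ) * c (k - j)))
    + ∑' j : ℤ, Complex.I * ((j : ℤ) : ℂ) * ξ j * c (k - j) = _
  rw [← s1.tsum_add s2, ← tsum_mul_left]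
  refine tsum_congr fun j => ?_
  push_cast; ring

theorem cv_summable {ξ c : FC} (h2 : Summable fun p => zz p ^ 2 * ‖ξ p‖) {K : ℝ}
    (hc : ∀ k, ‖c k‖ ≤ K) (k : ℤ) : Summable fun p : ℤ => ‖ξ p * c (k - p)‖ := by
  have hK : 0 ≤ K := (norm_nonneg _).trans (hc 0)
  refine Summable.of_nonneg_of_le (fun _ => norm_nonneg _) (fun p => ?_) (h2.mul_left K)
  rw [norm_mul]
  have h1 := one_le_zz p
  have : 1 ≤ zz p ^ 2 := by nlinarith
  calc ‖ξ p‖ * ‖c (k - p)‖ ≤ ‖ξ p‖ * K := by gcongr; exact hc _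
    _ = K * (1 * ‖ξ p‖) := by ring
    _ ≤ _ := by gcongr

theorem cv_bound {ξ c : FC} (h2 : Summable fun p => zz p ^ 2 * ‖ξ p‖) {K : ℝ}
    (hc : ∀ k, ‖c k‖ ≤ K) (k : ℤ) :
    ‖∑' p : ℤ, ξ p * c (k - p)‖ ≤ K * ∑' p, zz p ^ 2 * ‖ξ p‖ := by
  have hK : 0 ≤ K := (norm_nonneg _).trans (hc 0)
  refine tsum_of_norm_bounded (h2.mul_left K).hasSum (fun p => ?_) |>.trans (le_of_eq tsum_mul_left)
  rw [norm_mul]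
  have h1 := one_le_zz p
  have : 1 ≤ zz p ^ 2 := by nlinarith
  calc ‖ξ p‖ * ‖c (k - p)‖ ≤ ‖ξ p‖ * K := by gcongr; exact hc _
    _ = K * (1 * ‖ξ p‖) := by ring
    _ ≤ _ := by gcongr

theorem lie_eq' {ξ c : FC} (h2 : Summable fun p => zz p ^ 2 * ‖ξ p‖) {K : ℝ}
    (hc : ∀ k, ‖c k‖ ≤ K) (k : ℤ) :
    FC.lie ξ c k = Complex.I * (k : ℂ) * ∑' p : ℤ, ξ p * c (k - p) := by
  have hK : 0 ≤ K := (norm_nonneg _).trans (hc 0)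
  exact lie_eq h2 hK (fun k => (hc k).trans (le_mul_of_one_le_right hK (one_le_zz k))) k

theorem lie2_eq {ξ c : FC} (h2 : Summable fun p => zz p ^ 2 * ‖ξ p‖) {K : ℝ}
    (hc : ∀ k, ‖c k‖ ≤ K) (k : ℤ) :
    FC.lie2 ξ c k = Complex.I * (k : ℂ) * ∑' p : ℤ, ξ p *
      (Complex.I * ((k - p : ℤ) : ℂ) * ∑' q : ℤ, ξ q * c (k - p - q)) := by
  have hK : 0 ≤ K := (norm_nonneg _).trans (hc 0)
  have hS : 0 ≤ ∑' p, zz p ^ 2 * ‖ξ p‖ := tsum_nonneg fun p => by positivity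
  unfold FC.lie2
  rw [lie_eq h2 (mul_nonneg hK hS) (fun j => ?_) k]
  · congr 1
    refine tsum_congr fun p => ?_
    rw [lie_eq' h2 hc]
  · rw [lie_eq' h2 hc, norm_mul, norm_mul, Complex.norm_I, Complex.norm_intCast, one_mul, mul_comm]
    have := cv_bound h2 hc j
    have := abs_le_zz j
    have := zz_pos j
    gcongr

theorem norm_le_hs {s : ℝ} (hs : 0 ≤ s) {θ : FC} (h : FC.memHs s θ) (k : ℤ) :
    ‖θ k‖ ≤ FC.hsNorm s θ := by
  refine le_trans ?_ (ww_le h k)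
  unfold ww
  have : 1 ≤ zz k ^ (s / 2) := Real.one_le_rpow (one_le_zz k) (by positivity)
  nlinarith [norm_nonneg (θ k)]

theorem xi_sum {ξ : FC} (h : FC.memHs 6 ξ) : Summable fun p => zz p ^ 2 * ‖ξ p‖ := by
  have := l1_summable (t := 2) h (by norm_num)
  simpa using this

theorem xi_decay {A : ℝ} {ξ : FC} (h : FC.memHs (2 * A + 2) ξ) (p : ℤ) :
    zz p ^ A * ‖ξ p‖ ≤ (zz p)⁻¹ * FC.hsNorm (2 * A + 2) ξ := by
  have h1 := ww_le h p
  have zp := zz_pos p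
  unfold ww at h1
  rw [show (2 * A + 2) / 2 = A + 1 by ring, Real.rpow_add_one zp.ne'] at h1
  rw [inv_mul_eq_div, le_div_iff₀ zp]
  linarith

end LieIdentities

section Stochastic
open MeasureTheory Set Filter Topology

/-- Index set for the stochastic sums: `((i, (p, q)), j)`. -/
abbrev Om := (ℕ × (ℤ × ℤ)) × ℤ

def XX (ξ : ℕ → FC) (θ : FC) (w : Om) : ℂ :=
  ξ w.1.1 w.1.2.1 * ξ w.1.1 w.1.2.2 * θ w.2 * (starRingEnd ℂ) (θ (w.2 + (w.1.2.1 + w.1.2.2)))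

def Z1 (s ε : ℝ) (ξ : ℕ → FC) (θ : FC) (w : Om) : ℂ :=
  ((-(((w.2 + (w.1.2.1 + w.1.2.2) : ℤ) : ℝ) * ((w.2 + w.1.2.2 : ℤ) : ℝ)
    * mm s ε (w.2 + (w.1.2.1 + w.1.2.2)) ^ 2) : ℝ) : ℂ) * XX ξ θ w

def Z2 (s ε : ℝ) (ξ : ℕ → FC) (θ : FC) (w : Om) : ℂ :=
  (((((w.2 + w.1.2.2 : ℤ) : ℝ) ^ 2 * mm s ε (w.2 + w.1.2.2) ^ 2) : ℝ) : ℂ) * XX ξ θ w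

def al (s : ℝ) (ξ : ℕ → FC) (a : ℕ × (ℤ × ℤ)) : ℝ :=
  FC.hsNorm (2 * (s + 4) + 2) (ξ a.1) ^ 2 * ((zz a.2.1)⁻¹ * (zz a.2.2)⁻¹)

theorem al_nonneg (s : ℝ) (ξ : ℕ → FC) (a : ℕ × (ℤ × ℤ)) : 0 ≤ al s ξ a := by
  unfold al
  have := zz_pos a.2.1
  have := zz_pos a.2.2
  positivity

theorem al_summable (s : ℝ) (ξ : ℕ → FC)
    (h : Summable fun i : ℕ => FC.hsNorm (2 * (s + 4) + 2) (ξ i)) : Summable (al s ξ) := by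
  have h1 : Summable fun i : ℕ => FC.hsNorm (2 * (s + 4) + 2) (ξ i) ^ 2 := by
    have hn : ∀ i : ℕ, 0 ≤ FC.hsNorm (2 * (s + 4) + 2) (ξ i) := fun i => Real.sqrt_nonneg _
    refine Summable.of_nonneg_of_le (fun i => sq_nonneg _) (fun i => ?_)
      (h.mul_left (∑' i : ℕ, FC.hsNorm (2 * (s + 4) + 2) (ξ i)))
    rw [sq]
    exact mul_le_mul_of_nonneg_right (h.le_tsum i (fun j _ => hn j)) (hn i)
  have hz : ∀ a : ℤ, 0 ≤ (zz a)⁻¹ := fun a => (inv_pos.2 (zz_pos a)).le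
  have h2 : Summable fun a : ℤ × ℤ => (zz a.1)⁻¹ * (zz a.2)⁻¹ :=
    summable_zinv.mul_of_nonneg summable_zinv hz hz
  exact h1.mul_of_nonneg h2 (fun i => sq_nonneg _) (fun a => mul_nonneg (hz _) (hz _))

theorem XX_bound {s : ℝ} {ξ : ℕ → FC} (h : ∀ i, FC.memHs (2 * (s + 4) + 2) (ξ i)) (θ : FC)
    (i : ℕ) (p q j : ℤ) :
    (zz p ^ (s + 4) * zz q ^ (s + 4)) * ‖XX ξ θ ((i, (p, q)), j)‖
      ≤ al s ξ (i, (p, q)) * (‖θ j‖ * ‖θ (j + (p + q))‖) := by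
  have h1 := xi_decay (h i) p
  have h2 := xi_decay (h i) q
  unfold XX al
  simp only []
  rw [norm_mul, norm_mul, norm_mul, RCLike.norm_conj]
  have zp := zz_pos p
  have zq := zz_pos q
  have hn : 0 ≤ FC.hsNorm (2 * (s + 4) + 2) (ξ i) := Real.sqrt_nonneg _
  calc (zz p ^ (s + 4) * zz q ^ (s + 4)) * (‖ξ i p‖ * ‖ξ i q‖ * ‖θ j‖ * ‖θ (j + (p + q))‖)
      = (zz p ^ (s + 4) * ‖ξ i p‖) * (zz q ^ (s + 4) * ‖ξ i q‖) * (‖θ j‖ * ‖θ (j + (p + q))‖) := by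
        ring
    _ ≤ ((zz p)⁻¹ * FC.hsNorm (2 * (s + 4) + 2) (ξ i))
          * ((zz q)⁻¹ * FC.hsNorm (2 * (s + 4) + 2) (ξ i)) * (‖θ j‖ * ‖θ (j + (p + q))‖) := by
        have := Real.rpow_nonneg zp.le (s + 4)
        have := Real.rpow_nonneg zq.le (s + 4)
        gcongr
    _ = _ := by ring

theorem al_conv {s : ℝ} {ξ : ℕ → FC}
    (h : Summable fun i : ℕ => FC.hsNorm (2 * (s + 4) + 2) (ξ i)) {θ : FC} (hθ : FC.memHs s θ) :
    Summable (fun w : Om => al s ξ w.1 * (ww s θ w.2 * ww s θ (w.2 + (w.1.2.1 + w.1.2.2)))) ∧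
    ∑' w : Om, al s ξ w.1 * (ww s θ w.2 * ww s θ (w.2 + (w.1.2.1 + w.1.2.2)))
      ≤ (∑' a, al s ξ a) * FC.hsNorm s θ ^ 2 := by
  have := conv_sum (al s ξ) (al_summable s ξ h) (al_nonneg s ξ) (fun a => a.2.1 + a.2.2)
    (ww s θ) (ww s θ) (ww_summable hθ) (ww_summable hθ) (ww_nonneg s θ) (ww_nonneg s θ)
  rw [← hsNorm_sq, add_self_div_two] at this
  exact this

/-- generic bound for a symbol times `XX`. -/
theorem sym_bound {s : ℝ} {ξ : ℕ → FC} (h : ∀ i, FC.memHs (2 * (s + 4) + 2) (ξ i)) (θ : FC)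
    {K m : ℝ} (hK : 0 ≤ K) (i : ℕ) (p q j : ℤ)
    (hm : |m| ≤ K * (zz p ^ (s + 4) * zz q ^ (s + 4))
      * (zz j ^ (s / 2) * zz (j + (p + q)) ^ (s / 2))) :
    |m| * ‖XX ξ θ ((i, (p, q)), j)‖ ≤ K * (al s ξ (i, (p, q)) *
      (ww s θ j * ww s θ (j + (p + q)))) := by
  have h1 := XX_bound h θ i p q j
  have z1 := Real.rpow_nonneg (zz_pos j).le (s / 2)
  have z2 := Real.rpow_nonneg (zz_pos (j + (p + q))).le (s / 2)
  unfold ww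
  calc |m| * ‖XX ξ θ ((i, (p, q)), j)‖
      ≤ K * (zz p ^ (s + 4) * zz q ^ (s + 4))
      * (zz j ^ (s / 2) * zz (j + (p + q)) ^ (s / 2)) * ‖XX ξ θ ((i, (p, q)), j)‖ := by gcongr
    _ = K * (zz j ^ (s / 2) * zz (j + (p + q)) ^ (s / 2)) *
        ((zz p ^ (s + 4) * zz q ^ (s + 4)) * ‖XX ξ θ ((i, (p, q)), j)‖) := by ring
    _ ≤ K * (zz j ^ (s / 2) * zz (j + (p + q)) ^ (s / 2)) *
        (al s ξ (i, (p, q)) * (‖θ j‖ * ‖θ (j + (p + q))‖)) := by gcongr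
    _ = _ := by ring

theorem Z1_summable {s ε : ℝ} (hs : 0 ≤ s) (hε : ε ∈ Ioo (0 : ℝ) 1) {ξ : ℕ → FC}
    (hm : ∀ i, FC.memHs (2 * (s + 4) + 2) (ξ i))
    (h : Summable fun i : ℕ => FC.hsNorm (2 * (s + 4) + 2) (ξ i)) {θ : FC} (hθ : FC.memHs s θ) :
    Summable (Z1 s ε ξ θ) := by
  have hK : 0 ≤ (ε ^ 2)⁻¹ * 2 * 4 ^ s := by positivity
  refine Summable.of_norm_bounded ((al_conv h hθ).1.mul_left ((ε ^ 2)⁻¹ * 2 * 4 ^ s)) (fun w => ?_)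
  obtain ⟨⟨i, p, q⟩, j⟩ := w
  unfold Z1
  rw [norm_mul, Complex.norm_real, Real.norm_eq_abs, abs_neg]
  exact sym_bound hm θ hK i p q j (raw_bound hs hε j p q).1

theorem Z2_summable {s ε : ℝ} (hs : 0 ≤ s) (hε : ε ∈ Ioo (0 : ℝ) 1) {ξ : ℕ → FC}
    (hm : ∀ i, FC.memHs (2 * (s + 4) + 2) (ξ i))
    (h : Summable fun i : ℕ => FC.hsNorm (2 * (s + 4) + 2) (ξ i)) {θ : FC} (hθ : FC.memHs s θ) :
    Summable (Z2 s ε ξ θ) := by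
  have hK : 0 ≤ (ε ^ 2)⁻¹ * 2 * 4 ^ s := by positivity
  refine Summable.of_norm_bounded ((al_conv h hθ).1.mul_left ((ε ^ 2)⁻¹ * 2 * 4 ^ s)) (fun w => ?_)
  obtain ⟨⟨i, p, q⟩, j⟩ := w
  unfold Z2
  rw [norm_mul, Complex.norm_real, Real.norm_eq_abs]
  exact sym_bound hm θ hK i p q j (raw_bound hs hε j p q).2

def eA : ℤ × (ℕ × (ℤ × ℤ)) ≃ Om where
  toFun := fun a => (a.2, a.1 - (a.2.2.1 + a.2.2.2))
  invFun := fun w => (w.2 + (w.1.2.1 + w.1.2.2), w.1)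
  left_inv := fun a => by simp
  right_inv := fun a => by simp

def eB : ℕ × (ℤ × (ℤ × ℤ)) ≃ Om where
  toFun := fun a => ((a.1, (-a.2.2.1, a.2.2.2)), a.2.1 - a.2.2.2)
  invFun := fun w => (w.1.1, (w.2 + w.1.2.2, (-w.1.2.1, w.1.2.2)))
  left_inv := fun a => by simp
  right_inv := fun a => by simp

def eS : Om ≃ Om where
  toFun := fun w => ((w.1.1, (w.1.2.2, w.1.2.1)), w.2)
  invFun := fun w => ((w.1.1, (w.1.2.2, w.1.2.1)), w.2)
  left_inv := fun a => by simp
  right_inv := fun a => by simp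

def eR : Om ≃ Om where
  toFun := fun w => ((w.1.1, (-w.1.2.2, -w.1.2.1)), w.2 + (w.1.2.1 + w.1.2.2))
  invFun := fun w => ((w.1.1, (-w.1.2.2, -w.1.2.1)), w.2 + (w.1.2.1 + w.1.2.2))
  left_inv := fun a => by
    obtain ⟨⟨i, p, q⟩, j⟩ := a
    simp only [neg_neg, Prod.mk.injEq, true_and]; ring
  right_inv := fun a => by
    obtain ⟨⟨i, p, q⟩, j⟩ := a
    simp only [neg_neg, Prod.mk.injEq, true_and]; ring

theorem stoch1 {s ε : ℝ} (hs : 0 ≤ s) (hε : ε ∈ Ioo (0 : ℝ) 1) {ξ : ℕ → FC}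
    (hm6 : ∀ i, FC.memHs 6 (ξ i))
    (hm : ∀ i, FC.memHs (2 * (s + 4) + 2) (ξ i))
    (h : Summable fun i : ℕ => FC.hsNorm (2 * (s + 4) + 2) (ξ i)) {θ : FC} (hθ : FC.memHs s θ) :
    HasSum (fun k : ℤ => ((mm s ε k ^ 2 : ℝ) : ℂ) *
      (FC.tsumFC (fun i => FC.lie2 (ξ i) θ) k * (starRingEnd ℂ) (θ k)))
      (∑' w, Z1 s ε ξ θ w) := by
  have h1 := Z1_summable hs hε hm h hθ
  have h2 : Summable fun a => Z1 s ε ξ θ (eA a) := (eA.summable_iff (f := Z1 s ε ξ θ)).2 h1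
  have h3 : ∀ k : ℤ, ∑' a : ℕ × (ℤ × ℤ), Z1 s ε ξ θ (eA (k, a)) = ((mm s ε k ^ 2 : ℝ) : ℂ) *
      (FC.tsumFC (fun i => FC.lie2 (ξ i) θ) k * (starRingEnd ℂ) (θ k)) := by
    intro k
    have g1 := h2.prod_factor k
    rw [g1.tsum_prod]
    unfold FC.tsumFC
    rw [← tsum_mul_right, ← tsum_mul_left]
    refine tsum_congr fun i => ?_
    have g2 := g1.prod_factor i
    beta_reduce
    rw [g2.tsum_prod, lie2_eq (xi_sum (hm6 i)) (norm_le_hs hs hθ)]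
    rw [← tsum_mul_left, ← tsum_mul_right, ← tsum_mul_left]
    refine tsum_congr fun p => ?_
    rw [← tsum_mul_left, ← tsum_mul_left, ← tsum_mul_left, ← tsum_mul_right, ← tsum_mul_left]
    refine tsum_congr fun q => ?_
    have e1 : k - (p + q) + (p + q) = k := by ring
    have e2 : k - (p + q) + q = k - p := by ring
    have e3 : k - (p + q) = k - p - q := by ring
    simp only [Z1, XX, eA, Equiv.coe_fn_mk, e1, e2]
    rw [e3]
    push_cast
    linear_combination (-(mm s ε k : ℂ) ^ 2 * k * ((k : ℂ) - p) * ξ i p * ξ i q * θ (k - p - q) *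
      (starRingEnd ℂ) (θ k)) * (Complex.I_mul_I)
  have h4 := h2.hasSum.prod_fiberwise (fun k => (h2.prod_factor k).hasSum)
  rw [eA.tsum_eq (Z1 s ε ξ θ)] at h4
  simpa only [h3] using h4

theorem hsNorm_T_sq (s ε : ℝ) (c : FC) :
    FC.hsNorm s (FC.T ε c) ^ 2 = ∑' l : ℤ, mm s ε l ^ 2 * ‖c l‖ ^ 2 := by
  rw [hsNorm_sq]
  refine tsum_congr fun l => ?_
  rw [ww_sq, ← mm_sq_eq]
  unfold FC.T FC.mult
  rw [norm_mul, Complex.norm_real, Real.norm_eq_abs, mul_pow, sq_abs]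
  ring

theorem stoch2 {s ε : ℝ} (hs : 0 ≤ s) (hε : ε ∈ Ioo (0 : ℝ) 1) {ξ : ℕ → FC}
    (hm6 : ∀ i, FC.memHs 6 (ξ i)) (hr : ∀ i, FC.isReal (ξ i))
    (hm : ∀ i, FC.memHs (2 * (s + 4) + 2) (ξ i))
    (h : Summable fun i : ℕ => FC.hsNorm (2 * (s + 4) + 2) (ξ i)) {θ : FC} (hθ : FC.memHs s θ) :
    HasSum (fun i : ℕ => ((FC.hsNorm s (FC.T ε (FC.lie (ξ i) θ)) ^ 2 : ℝ) : ℂ))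
      (∑' w, Z2 s ε ξ θ w) := by
  have h1 := Z2_summable hs hε hm h hθ
  have h2 : Summable fun a => Z2 s ε ξ θ (eB a) := (eB.summable_iff (f := Z2 s ε ξ θ)).2 h1
  have h3 : ∀ i : ℕ, ∑' a : ℤ × (ℤ × ℤ), Z2 s ε ξ θ (eB (i, a)) =
      ((FC.hsNorm s (FC.T ε (FC.lie (ξ i) θ)) ^ 2 : ℝ) : ℂ) := by
    intro i
    have g1 := h2.prod_factor i
    rw [g1.tsum_prod, hsNorm_T_sq, Complex.ofReal_tsum]
    refine tsum_congr fun l => ?_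
    have hx := xi_sum (hm6 i)
    have hb := norm_le_hs hs hθ
    have c1 := cv_summable hx hb l
    have c2 : Summable fun p : ℤ => ‖(starRingEnd ℂ) (ξ i p * θ (l - p))‖ := by
      simpa only [RCLike.norm_conj] using c1
    have c3 := tsum_mul_tsum_of_summable_norm c2 c1
    rw [← Complex.conj_tsum] at c3
    rw [lie_eq' hx hb, norm_mul, norm_mul, Complex.norm_I, Complex.norm_intCast, one_mul, mul_pow,
      sq_abs]
    have c4 : ((‖∑' p : ℤ, ξ i p * θ (l - p)‖ ^ 2 : ℝ) : ℂ) =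
        ∑' z : ℤ × ℤ, (starRingEnd ℂ) (ξ i z.1 * θ (l - z.1)) * (ξ i z.2 * θ (l - z.2)) := by
      rw [← c3, mul_comm, Complex.mul_conj, Complex.normSq_eq_norm_sq]
    rw [← mul_assoc, Complex.ofReal_mul, c4, ← tsum_mul_left]
    refine tsum_congr fun z => ?_
    obtain ⟨p, q⟩ := z
    have e1 : l - q + (-p + q) = l - p := by ring
    have e2 : l - q + q = l := by ring
    simp only [Z2, XX, eB, Equiv.coe_fn_mk, e1, e2, hr i p, map_mul]
    push_cast
    ring
  have h4 := h2.hasSum.prod_fiberwise (fun k => (h2.prod_factor k).hasSum)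
  rw [eB.tsum_eq (Z2 s ε ξ θ)] at h4
  simpa only [h3] using h4

theorem XX_S (ξ : ℕ → FC) (θ : FC) (w : Om) : XX ξ θ (eS w) = XX ξ θ w := by
  simp only [XX, eS, Equiv.coe_fn_mk]
  rw [add_comm w.1.2.2, mul_comm (ξ w.1.1 w.1.2.2)]

theorem XX_R {ξ : ℕ → FC} (hr : ∀ i, FC.isReal (ξ i)) (θ : FC) (w : Om) :
    (XX ξ θ (eR w)).re = (XX ξ θ w).re := by
  obtain ⟨⟨i, p, q⟩, j⟩ := w
  rw [← Complex.conj_re]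
  have e1 : j + (p + q) + (-q + -p) = j := by ring
  simp only [XX, eR, Equiv.coe_fn_mk, e1, hr i p, hr i q, map_mul, Complex.conj_conj]
  ring_nf

def GZ (s ε : ℝ) (ξ : ℕ → FC) (θ : FC) (w : Om) : ℝ := (Z1 s ε ξ θ w + Z2 s ε ξ θ w).re

theorem GZ_eq (s ε : ℝ) (ξ : ℕ → FC) (θ : FC) (i : ℕ) (p q j : ℤ) :
    GZ s ε ξ θ ((i, (p, q)), j) = (-(((j + (p + q) : ℤ) : ℝ) * ((j + q : ℤ) : ℝ)
      * mm s ε (j + (p + q)) ^ 2) + ((j + q : ℤ) : ℝ) ^ 2 * mm s ε (j + q) ^ 2)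
      * (XX ξ θ ((i, (p, q)), j)).re := by
  unfold GZ Z1 Z2
  rw [Complex.add_re, Complex.re_ofReal_mul, Complex.re_ofReal_mul]
  ring

theorem GZ_four {s ε : ℝ} {ξ : ℕ → FC} (hr : ∀ i, FC.isReal (ξ i)) (θ : FC) (i : ℕ)
    (p q j : ℤ) :
    GZ s ε ξ θ ((i, (p, q)), j) + GZ s ε ξ θ (eS ((i, (p, q)), j))
      + (GZ s ε ξ θ (eR ((i, (p, q)), j)) + GZ s ε ξ θ (eS (eR ((i, (p, q)), j))))
    = -(SS s ε ((j + (p + q) : ℤ) : ℝ) p q) * (XX ξ θ ((i, (p, q)), j)).re := by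
  have x1 := congrArg Complex.re (XX_S ξ θ ((i, (p, q)), j))
  have x2 := XX_R hr θ ((i, (p, q)), j)
  have x3 := congrArg Complex.re (XX_S ξ θ (eR ((i, (p, q)), j)))
  rw [x2] at x3
  simp only [eS, eR, Equiv.coe_fn_mk] at x1 x2 x3 ⊢
  rw [GZ_eq, GZ_eq, GZ_eq, GZ_eq, x1, x2, x3]
  have e1 : j + (p + q) + (-q + -p) = j := by ring
  have e2 : j + (p + q) + (-p + -q) = j := by ring
  have e3 : j + (p + q) + -p = j + q := by ring
  have e4 : j + (p + q) + -q = j + p := by ring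
  have e5 : j + (q + p) = j + (p + q) := by ring
  rw [e1, e2, e3, e4, e5]
  have n1 : NN s ε ((j + (p + q) : ℤ) : ℝ) = ((j + (p + q) : ℤ) : ℝ) * mm s ε (j + (p + q)) ^ 2 := rfl
  have n2 : NN s ε (((j + (p + q) : ℤ) : ℝ) - p) = ((j + q : ℤ) : ℝ) * mm s ε (j + q) ^ 2 := by
    rw [show ((j + (p + q) : ℤ) : ℝ) - p = ((j + q : ℤ) : ℝ) by push_cast; ring]; rfl
  have n3 : NN s ε (((j + (p + q) : ℤ) : ℝ) - q) = ((j + p : ℤ) : ℝ) * mm s ε (j + p) ^ 2 := by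
    rw [show ((j + (p + q) : ℤ) : ℝ) - q = ((j + p : ℤ) : ℝ) by push_cast; ring]; rfl
  have n4 : NN s ε (((j + (p + q) : ℤ) : ℝ) - p - q) = ((j : ℤ) : ℝ) * mm s ε j ^ 2 := by
    rw [show ((j + (p + q) : ℤ) : ℝ) - p - q = ((j : ℤ) : ℝ) by push_cast; ring]; rfl
  unfold SS
  rw [n1, n2, n3, n4]
  push_cast
  ring

theorem stoch_bound {s ε : ℝ} (hs : 0 ≤ s) (hε : ε ∈ Ioo (0 : ℝ) 1) {ξ : ℕ → FC}
    (hr : ∀ i, FC.isReal (ξ i))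
    (hm : ∀ i, FC.memHs (2 * (s + 4) + 2) (ξ i))
    (h : Summable fun i : ℕ => FC.hsNorm (2 * (s + 4) + 2) (ξ i)) {θ : FC} (hθ : FC.memHs s θ) :
    |(∑' w, Z1 s ε ξ θ w + ∑' w, Z2 s ε ξ θ w).re|
      ≤ (9 * c0 s * 16 ^ (s + 4)) * (∑' a, al s ξ a) * FC.hsNorm s θ ^ 2 := by
  have hZ := (Z1_summable hs hε hm h hθ).add (Z2_summable hs hε hm h hθ)
  rw [← (Z1_summable hs hε hm h hθ).tsum_add (Z2_summable hs hε hm h hθ)]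
  rw [Complex.re_tsum hZ]
  have hG : Summable (GZ s ε ξ θ) := (Complex.hasSum_re hZ.hasSum).summable
  change |∑' w, GZ s ε ξ θ w| ≤ _
  have hS : Summable fun w => GZ s ε ξ θ (eS w) := (eS.summable_iff (f := GZ s ε ξ θ)).2 hG
  have tS : ∑' w, GZ s ε ξ θ (eS w) = ∑' w, GZ s ε ξ θ w := eS.tsum_eq (GZ s ε ξ θ)
  have hH := hG.add hS
  have hR : Summable fun w => GZ s ε ξ θ (eR w) + GZ s ε ξ θ (eS (eR w)) :=
    (eR.summable_iff (f := fun w => GZ s ε ξ θ w + GZ s ε ξ θ (eS w))).2 hH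
  have tR : ∑' w, (GZ s ε ξ θ (eR w) + GZ s ε ξ θ (eS (eR w)))
      = ∑' w, (GZ s ε ξ θ w + GZ s ε ξ θ (eS w)) :=
    eR.tsum_eq (fun w => GZ s ε ξ θ w + GZ s ε ξ θ (eS w))
  have t4 : 4 * ∑' w, GZ s ε ξ θ w = ∑' w, (GZ s ε ξ θ w + GZ s ε ξ θ (eS w)
      + (GZ s ε ξ θ (eR w) + GZ s ε ξ θ (eS (eR w)))) := by
    rw [hH.tsum_add hR, tR, hG.tsum_add hS, tS]; ring
  have hK : 0 ≤ 9 * c0 s * 16 ^ (s + 4) := by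
    have := c0_nonneg hs
    positivity
  have hc := al_conv h hθ
  have hb : ‖∑' w, (GZ s ε ξ θ w + GZ s ε ξ θ (eS w)
      + (GZ s ε ξ θ (eR w) + GZ s ε ξ θ (eS (eR w))))‖ ≤
      ∑' w : Om, (9 * c0 s * 16 ^ (s + 4)) *
        (al s ξ w.1 * (ww s θ w.2 * ww s θ (w.2 + (w.1.2.1 + w.1.2.2)))) := by
    refine tsum_of_norm_bounded (hc.1.mul_left _).hasSum (fun w => ?_)
    obtain ⟨⟨i, p, q⟩, j⟩ := w
    rw [GZ_four hr, Real.norm_eq_abs, abs_mul, abs_neg]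
    have b1 := SS_bound hs hε (j + (p + q)) p q
    rw [show j + (p + q) - p - q = j by ring] at b1
    have b2 := Complex.abs_re_le_norm (XX ξ θ ((i, (p, q)), j))
    have m1 : mm s ε j ≤ zz j ^ (s / 2) := mm_le s ε j
    have m2 : mm s ε (j + (p + q)) ≤ zz (j + (p + q)) ^ (s / 2) := mm_le s ε _
    have z1 := Real.rpow_nonneg (zz_pos j).le (s / 2)
    have z2 := Real.rpow_nonneg (zz_pos p).le (s + 4)
    have z3 := Real.rpow_nonneg (zz_pos q).le (s + 4)
    have z4 := (mm_pos s ε (j + (p + q))).le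
    refine (mul_le_mul_of_nonneg_left b2 (abs_nonneg _)).trans (sym_bound hm θ hK i p q j ?_)
    refine b1.trans ?_
    gcongr
  rw [← t4, tsum_mul_left, norm_mul, Real.norm_eq_abs, Real.norm_eq_abs] at hb
  have hb2 : (9 * c0 s * 16 ^ (s + 4)) * ∑' w : Om, (al s ξ w.1 * (ww s θ w.2
      * ww s θ (w.2 + (w.1.2.1 + w.1.2.2)))) ≤
      (9 * c0 s * 16 ^ (s + 4)) * ((∑' a, al s ξ a) * FC.hsNorm s θ ^ 2) :=
    mul_le_mul_of_nonneg_left hc.2 hK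
  have h4 : |(4 : ℝ)| = 4 := by norm_num
  rw [h4] at hb
  have := abs_nonneg (∑' w, GZ s ε ξ θ w)
  linarith

end Stochastic

section Assemble
open MeasureTheory Set Filter Topology

theorem inner_eq {s ε : ℝ} (hs : 2 ≤ s) (hε : ε ∈ Ioo (0 : ℝ) 1) {ξ : ℕ → FC}
    (hm6 : ∀ i, FC.memHs 6 (ξ i))
    (hm : ∀ i, FC.memHs (2 * (s + 4) + 2) (ξ i))
    (h : Summable fun i : ℕ => FC.hsNorm (2 * (s + 4) + 2) (ξ i)) {θ : FC} (hθ : FC.memHs s θ) :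
    2 * FC.hsInner s (FC.T ε (gCCF ξ θ)) (FC.T ε θ)
      = -2 * (∑' q, cF s ε θ q).re + (∑' w, Z1 s ε ξ θ w).re := by
  have h1 := nonlin_tsum s hs hε θ hθ
  have h2 := stoch1 (by linarith) hε hm6 hm h hθ
  have h3 := (h1.neg).add (h2.mul_left (1 / 2))
  have h4 : ∀ k : ℤ, ((FC.wt s k : ℂ) * (FC.T ε (gCCF ξ θ) k * (starRingEnd ℂ) (FC.T ε θ k)))
      = -(((mm s ε k ^ 2 : ℝ) : ℂ) *
      (FC.mul (FC.hilbert θ) (FC.D1 θ) k * (starRingEnd ℂ) (θ k))) + 1 / 2 *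
      (((mm s ε k ^ 2 : ℝ) : ℂ) *
      (FC.tsumFC (fun i => FC.lie2 (ξ i) θ) k * (starRingEnd ℂ) (θ k))) := by
    intro k
    have hg : gCCF ξ θ k = -(FC.mul (FC.hilbert θ) (FC.D1 θ) k)
        + ((1 / 2 : ℝ) : ℂ) * FC.tsumFC (fun i => FC.lie2 (ξ i) θ) k := by
      simp only [gCCF, Pi.add_apply, Pi.neg_apply, Pi.smul_apply, Complex.real_smul]
    unfold FC.T FC.mult
    rw [hg, ← mm_sq_eq]
    simp only [map_mul, Complex.conj_ofReal]
    push_cast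
    ring
  unfold FC.hsInner
  simp only [h4]
  rw [h3.tsum_eq, Complex.add_re, Complex.neg_re,
    show (1 / 2 : ℂ) = ((1 / 2 : ℝ) : ℂ) by push_cast; rfl, Complex.re_ofReal_mul]
  ring

end Assemble

/-- Let `s > 7/2` and `Σ_k ‖ξ_k‖_{H^σ} < ∞` for all `σ ≥ 0`.  With
`g(θ) = −(𝓗θ)∂ₓθ + ½ Σ_k 𝓛²_{ξ_k}θ` and `T̃_ε = (1−ε²∂ₓ²)⁻¹`, there is `C > 0`, independent
of `ε`, such that for all `ε ∈ (0,1)` and `θ ∈ H^s(𝕋)`: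
`2 (T̃_ε g(θ), T̃_ε θ)_{H^s} + Σ_k ‖T̃_ε 𝓛_{ξ_k} θ‖²_{H^s}`
`≤ C (1 + ‖∂ₓθ‖_{L^∞} + ‖𝓗∂ₓθ‖_{L^∞}) ‖θ‖²_{H^s}`. -/
theorem statement19 (s : ℝ) (hs : 7 / 2 < s) (ξ : ℕ → FC)
    (hξmem : ∀ σ : ℝ, 0 ≤ σ → ∀ k : ℕ, FC.memHs σ (ξ k))
    (hξreal : ∀ k : ℕ, FC.isReal (ξ k))
    (hξsum : ∀ σ : ℝ, 0 ≤ σ → Summable fun k : ℕ => FC.hsNorm σ (ξ k)) :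
    ∃ C > (0 : ℝ), ∀ ε : ℝ, ε ∈ Set.Ioo (0 : ℝ) 1 → ∀ θ : FC,
      FC.memHs s θ → FC.isReal θ →
      Summable (fun k : ℕ => FC.hsNorm s (FC.T ε (FC.lie (ξ k) θ)) ^ 2) ∧
      2 * FC.hsInner s (FC.T ε (gCCF ξ θ)) (FC.T ε θ)
          + ∑' k : ℕ, FC.hsNorm s (FC.T ε (FC.lie (ξ k) θ)) ^ 2
        ≤ C * (1 + FC.linfty (FC.D1 θ) + FC.linfty (FC.hilbert (FC.D1 θ)))
            * FC.hsNorm s θ ^ 2 := by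
  have hm6 : ∀ i, FC.memHs 6 (ξ i) := fun i => hξmem 6 (by norm_num) i
  have hA : (0 : ℝ) ≤ 2 * (s + 4) + 2 := by linarith
  have hm : ∀ i, FC.memHs (2 * (s + 4) + 2) (ξ i) := fun i => hξmem _ hA i
  have hsum := hξsum _ hA
  have hs0 : 0 ≤ s := by linarith
  obtain ⟨CN, hCN, hN⟩ := nonlin_bound s (by linarith)
  have hKS : 0 ≤ (9 * c0 s * 16 ^ (s + 4)) * (∑' a, al s ξ a) := by
    have h1 := c0_nonneg hs0
    have h2 : 0 ≤ ∑' a, al s ξ a := tsum_nonneg (al_nonneg s ξ)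
    positivity
  refine ⟨CN + (9 * c0 s * 16 ^ (s + 4)) * (∑' a, al s ξ a) + 1, by linarith, ?_⟩
  intro ε hε θ hθ hθr
  have h2 := stoch2 hs0 hε hm6 hξreal hm hsum hθ
  have h2r := Complex.hasSum_re h2
  simp only [Complex.ofReal_re] at h2r
  refine ⟨h2r.summable, ?_⟩
  rw [h2r.tsum_eq, inner_eq (by linarith) hε hm6 hm hsum hθ]
  have b1 := (abs_le.1 (hN ε hε θ hθ hθr)).1
  have b2 := (abs_le.1 (stoch_bound hs0 hε hξreal hm hsum hθ)).2
  rw [Complex.add_re] at b2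
  have l1 : 0 ≤ FC.linfty (FC.D1 θ) := Real.iSup_nonneg fun x => norm_nonneg _
  have l2 : 0 ≤ FC.linfty (FC.hilbert (FC.D1 θ)) := Real.iSup_nonneg fun x => norm_nonneg _
  have hn := sq_nonneg (FC.hsNorm s θ)
  unfold AA at b1
  set a := FC.linfty (FC.D1 θ)
  set b := FC.linfty (FC.hilbert (FC.D1 θ))
  set n := FC.hsNorm s θ ^ 2
  set KS := (9 * c0 s * 16 ^ (s + 4)) * (∑' a, al s ξ a)
  have e1 : 0 ≤ CN * n := mul_nonneg hCN hn
  have e2 : 0 ≤ KS * n * (a + b) := by positivity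
  have e3 : 0 ≤ n * (1 + a + b) := by positivity
  have e4 : CN * ((a + b) / 2) * n = CN * n * (a + b) / 2 := by ring
  have e5 : (CN + KS + 1) * (1 + a + b) * n = CN * n + CN * n * (a + b) + KS * n
    + KS * n * (a + b) + n * (1 + a + b) := by ring
  rw [e5]
  rw [neg_le] at b1
  linarith
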